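/- For every finite abelian 2-subgroup H of SL_3(ℤ), the centralizer C(H) of H in SL_3(ℤ) is rationally acyclic: the group cohomology of C(H) with trivial rational coefficients satisfies H⁰(C(H); ℚ) = ℚ and Hⁱ(C(H); ℚ) = 0 for all i > 0. -/

import Mathlib

open CategoryTheory

/-!
The rays `u uᵀ` of the perfect form of type `A₂` or `A₃` and their translates under `GLₙ(ℤ)` form
Voronoi's fan, a simplicial decomposition of the cone of positive definite forms. Ordering the
maximal cones by the values of their linear forms at a generic point gives a shelling, so the
complex of locally finite chains is exact except in top degree, where the cycles are spanned by the
orientation of the space of forms. Stabilizers of cells are finite, hence over a field of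
characteristic zero the chain modules have no higher cohomology. After a twist by the orientation
character the top cycles become the trivial module, while every smaller cell is reversed by some
element of its stabilizer, so that the chains and cycles below top degree have no invariants.
Dimension shifting along the complex then kills the cohomology of the trivial module in positive
degrees, for all groups acting on the fan that contain enough of the reversing elements.

A nontrivial finite 2-subgroup `H` of `SL₃(ℤ)` has a central involution `z`. If `H` is trivial, the
centralizer is `SL₃(ℤ)` and the fan of `A₃` applies. If `H = {1, z}`, the centralizer acts
faithfully on the `-1`-eigenspace of `z`, and its image in `GL₂(ℤ)` contains `Γ(2)`, so the fan of
`A₂` applies. Otherwise the elements of the centralizer also commute with some `u ≠ 1, z` such that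
`u² = 1` or `u² = z`. On the eigenspace they are therefore units of an order in `ℚ × ℚ` or in an
imaginary quadratic field, of which there are finitely many.
-/

section AlternatingFunctions

variable {X R : Type*} [CommRing R]

/-- Alternating functions on ordered tuples of vertices, recorded as lists: exchanging two adjacent
entries changes the sign. These are the (locally finite) simplicial chains. -/
def IsAlternating (φ : List X → R) : Prop :=
  ∀ (p : List X) (a b : X) (q : List X), φ (p ++ a :: b :: q) = -φ (p ++ b :: a :: q)

namespace IsAlternating

variable {φ : List X → R}

theorem comp_cons (hφ : IsAlternating φ) (x : X) : IsAlternating fun l ↦ φ (x :: l) :=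
  fun p ↦ hφ (x :: p)

theorem comp_map {Y : Type*} (hφ : IsAlternating φ) (f : Y → X) :
    IsAlternating fun l ↦ φ (l.map f) := fun p a b q ↦ by
  simpa only [List.map_append, List.map_cons] using hφ (p.map f) (f a) (f b) (q.map f)

theorem cons_cons (hφ : IsAlternating φ) (a b : X) (q : List X) :
    φ (a :: b :: q) = -φ (b :: a :: q) :=
  hφ [] a b q

theorem eq_zero_of_perm (hφ : IsAlternating φ) {l l' : List X} (h : l.Perm l') (h0 : φ l = 0) :
    φ l' = 0 := by
  induction h generalizing φ with
  | nil => exact h0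
  | cons x _ ih => exact ih (hφ.comp_cons x) h0
  | swap x y l => rw [hφ.cons_cons, h0, neg_zero]
  | trans _ _ ih₁ ih₂ => exact ih₂ hφ (ih₁ hφ h0)

variable [DecidableEq X]

theorem eq_neg_one_pow_mul_cons_erase (hφ : IsAlternating φ) {e : X} {l : List X} (he : e ∈ l) :
    φ l = (-1) ^ l.idxOf e * φ (e :: l.erase e) := by
  induction l generalizing φ with
  | nil => simp at he
  | cons x m ih =>
    rcases eq_or_ne x e with rfl | hx
    · simp
    · rw [ih (hφ.comp_cons x) ((List.mem_cons.1 he).resolve_left hx.symm),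
        List.idxOf_cons_ne _ hx, List.erase_cons_tail (by simpa using hx), hφ.cons_cons x e,
        pow_succ]
      ring

theorem map_swap (hφ : IsAlternating φ) {l : List X} (hl : l.Nodup) {a b : X} (hab : a ≠ b)
    (ha : a ∈ l) (hb : b ∈ l) : φ (l.map (Equiv.swap a b)) = -φ l := by
  set σ := Equiv.swap a b with hσ
  set m := (l.erase a).erase b with hm
  have hb' : b ∈ l.erase a := (List.mem_erase_of_ne hab.symm).2 hb
  have hfix : m.map σ = m := by
    refine (List.map_congr_left fun x hx ↦ ?_).trans m.map_id
    rw [hm, (hl.erase a).mem_erase_iff, hl.mem_erase_iff] at hx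
    exact Equiv.swap_apply_of_ne_of_ne hx.2.1 hx.1
  have hfront : ∀ {ψ : List X → R}, IsAlternating ψ →
      ψ l = (-1) ^ l.idxOf a * ((-1) ^ (l.erase a).idxOf b * ψ (a :: b :: m)) := fun {ψ} hψ ↦ by
    rw [hψ.eq_neg_one_pow_mul_cons_erase ha,
      (hψ.comp_cons a).eq_neg_one_pow_mul_cons_erase hb']
  rw [hfront hφ, hfront (hφ.comp_map σ)]
  simp only [List.map_cons, hfix]
  rw [hσ, Equiv.swap_apply_left, Equiv.swap_apply_right, hφ.cons_cons]
  ring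

end IsAlternating

variable [DecidableEq X]

/-- The signed deletion of the vertex `e`, i.e. `±φ` of the tuple without `e`, with the sign that
makes the result alternating on the tuples containing `e`. -/
def signedErase (e : X) (φ : List X → R) (l : List X) : R :=
  if e ∈ l ∧ l.Nodup then (-1) ^ l.idxOf e * φ (l.erase e) else 0

theorem signedErase_cons_self (φ : List X → R) {e : X} {l : List X} (h : (e :: l).Nodup) :
    signedErase e φ (e :: l) = φ l := by
  simp [signedErase, h]

theorem signedErase_cons_of_ne (φ : List X → R) {e w : X} {l : List X} (hw : w ≠ e)
    (he : e ∈ l) (h : (w :: l).Nodup) :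
    signedErase e φ (w :: l) = -((-1) ^ l.idxOf e * φ (w :: l.erase e)) := by
  rw [signedErase, if_pos ⟨List.mem_cons_of_mem _ he, h⟩, List.idxOf_cons_ne _ hw,
    List.erase_cons_tail (by simpa using hw), pow_succ]
  ring

theorem signedErase_of_notMem (φ : List X → R) {e : X} {l : List X} (h : e ∉ l) :
    signedErase e φ l = 0 :=
  if_neg fun h' ↦ h h'.1

theorem IsAlternating.signedErase {φ : List X → R} (hφ : IsAlternating φ) (e : X) :
    IsAlternating (signedErase e φ) := fun p a b q ↦ by
  have hperm : (p ++ a :: b :: q).Perm (p ++ b :: a :: q) := (List.Perm.swap b a q).append_left p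
  by_cases h : e ∈ p ++ a :: b :: q ∧ (p ++ a :: b :: q).Nodup
  swap
  · rw [_root_.signedErase, _root_.signedErase, if_neg h, if_neg, neg_zero]
    rwa [← hperm.mem_iff, ← hperm.nodup_iff]
  rw [_root_.signedErase, _root_.signedErase, if_pos h,
    if_pos (by rwa [← hperm.mem_iff, ← hperm.nodup_iff])]
  have hab : a ≠ b := by
    rintro rfl
    simp [List.nodup_append] at h
  by_cases hp : e ∈ p
  · rw [List.erase_append_left _ hp, List.erase_append_left _ hp, hφ, List.idxOf_append_of_mem hp,
      List.idxOf_append_of_mem hp, mul_neg]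
  simp only [List.erase_append_right _ hp, List.idxOf_append_of_notMem hp]
  rcases eq_or_ne a e with rfl | ha
  · rw [List.idxOf_cons_self, List.idxOf_cons_ne _ hab.symm, List.idxOf_cons_self,
      List.erase_cons_head, List.erase_cons_tail (by simpa using hab.symm), List.erase_cons_head]
    ring
  rcases eq_or_ne b e with rfl | hb
  · rw [List.idxOf_cons_self, List.idxOf_cons_ne _ hab, List.idxOf_cons_self,
      List.erase_cons_head, List.erase_cons_tail (by simpa using hab), List.erase_cons_head]
    ring
  · simp only [List.idxOf_cons_ne _ ha, List.idxOf_cons_ne _ hb,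
      List.erase_cons_tail (beq_eq_false_iff_ne.2 ha ▸ Bool.false_ne_true),
      List.erase_cons_tail (beq_eq_false_iff_ne.2 hb ▸ Bool.false_ne_true)]
    rw [hφ]
    ring

end AlternatingFunctions

open Finset

/-- A set system on the vertex set `X` (the cells), closed under taking intermediate sets and
locally finite upwards, together with a shelling: the cells are partitioned into Boolean intervals
`[bot S, top S]`, each coface outside its interval lies in an interval of smaller rank, and only the
interval of the cell `base` is a singleton. -/
structure ShelledComplex (X : Type*) [DecidableEq X] where
  IsCell : Finset X → Prop
  ordConnected : Set.OrdConnected {S | IsCell S}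
  coface : Finset X → Finset X
  mem_coface : ∀ {S w}, IsCell S → (w ∈ coface S ↔ w ∉ S ∧ IsCell (insert w S))
  bot : Finset X → Finset X
  top : Finset X → Finset X
  mem_Icc : ∀ {S}, IsCell S → S ∈ Icc (bot S) (top S)
  of_mem_Icc : ∀ {S T}, IsCell S → T ∈ Icc (bot S) (top S) →
    IsCell T ∧ bot T = bot S ∧ top T = top S
  rank : Finset X → ℕ
  rank_lt : ∀ {S w}, IsCell S → IsCell (insert w S) → w ∉ top S →
    rank (top (insert w S)) < rank (top S)
  base : Finset X
  top_eq_base : ∀ {S}, IsCell S → bot S = top S → top S = base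
  coface_base : coface base = ∅

namespace ShelledComplex

variable {X R : Type*} [DecidableEq X] [CommRing R] (C : ShelledComplex X)

variable (R) in
/-- The alternating functions supported on the cells with `j` vertices. No finiteness of the support
is required: these are Borel–Moore chains. -/
def chains (j : ℕ) : Submodule R (List X → R) where
  carrier := {φ | IsAlternating φ ∧ ∀ l, φ l ≠ 0 → l.Nodup ∧ C.IsCell l.toFinset ∧ l.length = j}
  add_mem' {φ ψ} hφ hψ := by
    refine ⟨fun p a b q ↦ ?_, fun l hl ↦ ?_⟩
    · rw [Pi.add_apply, Pi.add_apply, hφ.1, hψ.1, neg_add]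
    · by_cases h : φ l = 0
      · exact hψ.2 l fun h' ↦ hl (by simp [h, h'])
      · exact hφ.2 l h
  zero_mem' := ⟨fun _ _ _ _ ↦ neg_zero.symm, fun l hl ↦ absurd rfl hl⟩
  smul_mem' c φ hφ := by
    refine ⟨fun p a b q ↦ ?_, fun l hl ↦ hφ.2 l fun h ↦ hl (by simp [h])⟩
    rw [Pi.smul_apply, Pi.smul_apply, hφ.1, smul_neg]

open Classical in
/-- The boundary of locally finite chains: its value on a cell is the sum over all cofaces, the new
vertex being put in front. -/
noncomputable def boundary : (List X → R) →ₗ[R] (List X → R) where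
  toFun φ l := if C.IsCell l.toFinset then ∑ w ∈ C.coface l.toFinset, φ (w :: l) else 0
  map_add' φ ψ := by
    ext l
    dsimp only [Pi.add_apply]
    split_ifs <;> simp [sum_add_distrib]
  map_smul' c φ := by
    ext l
    dsimp only [Pi.smul_apply, RingHom.id_apply]
    split_ifs <;> simp [mul_sum]

variable {C} {φ : List X → R} {l : List X} {S : Finset X} {j : ℕ}

theorem boundary_apply (φ : List X → R) (h : C.IsCell l.toFinset) :
    C.boundary φ l = ∑ w ∈ C.coface l.toFinset, φ (w :: l) :=
  if_pos h

theorem boundary_apply_of_not_isCell (φ : List X → R) (h : ¬C.IsCell l.toFinset) :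
    C.boundary φ l = 0 :=
  if_neg h

theorem boundary_mem_chains (hφ : φ ∈ C.chains R (j + 1)) : C.boundary φ ∈ C.chains R j := by
  refine ⟨fun p a b q ↦ ?_, fun l hl ↦ ?_⟩
  · have h : (p ++ a :: b :: q).toFinset = (p ++ b :: a :: q).toFinset :=
      List.toFinset_eq_of_perm _ _ ((List.Perm.swap b a q).append_left p)
    by_cases hc : C.IsCell (p ++ a :: b :: q).toFinset
    · rw [boundary_apply φ hc, boundary_apply φ (h ▸ hc), ← h, ← sum_neg_distrib]
      exact sum_congr rfl fun w _ ↦ hφ.1.comp_cons w p a b q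
    · rw [boundary_apply_of_not_isCell φ hc, boundary_apply_of_not_isCell φ (h ▸ hc), neg_zero]
  · by_cases hc : C.IsCell l.toFinset
    · rw [boundary_apply φ hc] at hl
      obtain ⟨w, -, hw⟩ := exists_ne_zero_of_sum_ne_zero hl
      obtain ⟨hnodup, -, hlen⟩ := hφ.2 _ hw
      exact ⟨(List.nodup_cons.1 hnodup).2, hc, by simpa using hlen⟩
    · exact absurd (boundary_apply_of_not_isCell φ hc) hl

theorem mem_coface_insert_swap (hS : C.IsCell S) {v w : X} :
    (v ∈ C.coface S ∧ w ∈ C.coface (insert v S)) →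
      w ∈ C.coface S ∧ v ∈ C.coface (insert w S) := by
  rintro ⟨hv, hw⟩
  rw [C.mem_coface hS] at hv
  rw [C.mem_coface hv.2, mem_insert, not_or] at hw
  have hwS : C.IsCell (insert w S) := C.ordConnected.out hS hw.2
    ⟨subset_insert w S, insert_subset_insert w (subset_insert v S)⟩
  rw [C.mem_coface hS, C.mem_coface hwS, mem_insert, not_or, insert_comm]
  exact ⟨⟨hw.1.2, hwS⟩, ⟨fun h ↦ hw.1.1 h.symm, hv.1⟩, hw.2⟩

theorem boundary_boundary (hφ : IsAlternating φ) : C.boundary (C.boundary φ) = 0 := by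
  ext l
  by_cases hc : C.IsCell l.toFinset
  swap
  · exact boundary_apply_of_not_isCell _ hc
  have hsum : ∀ v ∈ C.coface l.toFinset, C.boundary φ (v :: l) =
      ∑ w ∈ C.coface (insert v l.toFinset), φ (w :: v :: l) := fun v hv ↦ by
    rw [boundary_apply, List.toFinset_cons]
    rw [List.toFinset_cons]
    exact ((C.mem_coface hc).1 hv).2
  rw [boundary_apply _ hc, sum_congr rfl hsum, sum_sigma', Pi.zero_apply]
  have hmem : ∀ v w, (⟨v, w⟩ : Σ _ : X, X) ∈
      (C.coface l.toFinset).sigma (fun v ↦ C.coface (insert v l.toFinset)) ↔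
        v ∈ C.coface l.toFinset ∧ w ∈ C.coface (insert v l.toFinset) := fun v w ↦ mem_sigma
  refine sum_involution (fun p _ ↦ ⟨p.2, p.1⟩) (fun p _ ↦ ?_) (fun p hp _ heq ↦ ?_)
    (fun p hp ↦ (hmem _ _).2 (mem_coface_insert_swap hc ((hmem _ _).1 hp))) fun p _ ↦ rfl
  · rw [hφ.cons_cons p.2 p.1, neg_add_cancel]
  · obtain ⟨h1, h2⟩ := (hmem _ _).1 hp
    rw [show p.2 = p.1 from congrArg Sigma.fst heq,
      C.mem_coface ((C.mem_coface hc).1 h1).2] at h2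
    exact h2.1 (mem_insert_self _ _)

section Contraction

open Classical in
variable (C) in
/-- A vertex that can be removed from `top S` without leaving the interval of `S`; it depends on the
interval only. -/
noncomputable def pivot (S : Finset X) : Option X :=
  if C.IsCell S then (C.top S \ C.bot S).toList.head? else none

variable {e w : X}

theorem pivot_eq_some (h : C.pivot S = some e) : C.IsCell S ∧ e ∈ C.top S ∧ e ∉ C.bot S := by
  unfold pivot at h
  split_ifs at h with hS
  exact ⟨hS, mem_sdiff.1 (mem_toList.1 (List.mem_of_mem_head? h))⟩

theorem eq_base_of_pivot_eq_none (hS : C.IsCell S) (h : C.pivot S = none) : S = C.base := by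
  have hsub : C.top S ⊆ C.bot S := by
    rwa [pivot, if_pos hS, List.head?_eq_none_iff, toList_eq_nil, sdiff_eq_empty_iff_subset] at h
  obtain ⟨h1, h2⟩ := Finset.mem_Icc.1 (C.mem_Icc hS)
  rw [← C.top_eq_base hS ((h1.trans h2).antisymm hsub)]
  exact h2.antisymm (hsub.trans h1)

theorem pivot_congr {T : Finset X} (hS : C.IsCell S) (hT : T ∈ Icc (C.bot S) (C.top S)) :
    C.pivot T = C.pivot S := by
  obtain ⟨h1, h2, h3⟩ := C.of_mem_Icc hS hT
  rw [pivot, pivot, if_pos hS, if_pos h1, h2, h3]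

theorem erase_pivot_mem_Icc (h : C.pivot S = some e) : S.erase e ∈ Icc (C.bot S) (C.top S) := by
  obtain ⟨hS, -, he⟩ := pivot_eq_some h
  obtain ⟨h1, h2⟩ := Finset.mem_Icc.1 (C.mem_Icc hS)
  exact Finset.mem_Icc.2 ⟨subset_erase.2 ⟨h1, he⟩, (erase_subset e S).trans h2⟩

theorem insert_mem_Icc (hS : C.IsCell S) (hw : w ∈ C.top S) :
    insert w S ∈ Icc (C.bot S) (C.top S) := by
  obtain ⟨h1, h2⟩ := Finset.mem_Icc.1 (C.mem_Icc hS)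
  exact Finset.mem_Icc.2 ⟨h1.trans (subset_insert w S), insert_subset hw h2⟩

variable (C) in
/-- The contracting homotopy: signed deletion of the pivot. -/
noncomputable def contraction (φ : List X → R) (l : List X) : R :=
  (C.pivot l.toFinset).elim 0 fun e ↦ signedErase e φ l

theorem contraction_apply (h : C.pivot l.toFinset = some e) (φ : List X → R) :
    C.contraction φ l = signedErase e φ l := by
  rw [contraction, h, Option.elim_some]

theorem exists_pivot_of_contraction_ne_zero (h : C.contraction φ l ≠ 0) :
    ∃ e, C.pivot l.toFinset = some e ∧ e ∈ l ∧ l.Nodup ∧ φ (l.erase e) ≠ 0 := by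
  cases he : C.pivot l.toFinset with
  | none => simp [contraction, he] at h
  | some e =>
    rw [contraction_apply he, signedErase] at h
    split_ifs at h with h'
    · exact ⟨e, rfl, h'.1, h'.2, right_ne_zero_of_mul h⟩
    · exact absurd rfl h

theorem contraction_mem_chains (hφ : φ ∈ C.chains R j) :
    C.contraction φ ∈ C.chains R (j + 1) := by
  refine ⟨fun p a b q ↦ ?_, fun l hl ↦ ?_⟩
  · have h : (p ++ a :: b :: q).toFinset = (p ++ b :: a :: q).toFinset :=
      List.toFinset_eq_of_perm _ _ ((List.Perm.swap b a q).append_left p)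
    cases he : C.pivot (p ++ a :: b :: q).toFinset with
    | none => rw [contraction, contraction, ← h, he, Option.elim_none, Option.elim_none, neg_zero]
    | some e =>
      rw [contraction_apply he, contraction_apply (h ▸ he)]
      exact hφ.1.signedErase e p a b q
  · obtain ⟨e, he, hel, hnodup, hne⟩ := exists_pivot_of_contraction_ne_zero hl
    refine ⟨hnodup, (pivot_eq_some he).1, ?_⟩
    rw [← (hφ.2 _ hne).2.2, List.length_erase_add_one hel]

variable (C) in
/-- Vanishing on all cells of rank less than `n`. -/
def VanishesBelow (n : ℕ) (φ : List X → R) : Prop :=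
  ∀ l : List X, C.IsCell l.toFinset → C.rank (C.top l.toFinset) < n → φ l = 0

theorem toFinset_erase_of_nodup (hl : l.Nodup) : (l.erase e).toFinset = l.toFinset.erase e := by
  ext x
  rw [List.mem_toFinset, hl.mem_erase_iff, mem_erase, List.mem_toFinset]

theorem contraction_eq_zero {n : ℕ} (hφ : C.VanishesBelow n φ)
    (hl : C.rank (C.top l.toFinset) < n) : C.contraction φ l = 0 := by
  by_contra h
  obtain ⟨e, he, -, hnodup, hne⟩ := exists_pivot_of_contraction_ne_zero h
  obtain ⟨hcell, -, htop⟩ := C.of_mem_Icc (pivot_eq_some he).1 (erase_pivot_mem_Icc he)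
  rw [← toFinset_erase_of_nodup hnodup] at hcell htop
  exact hne (hφ _ hcell (htop ▸ hl))

theorem boundary_eq_sum_top (hc : C.IsCell l.toFinset)
    (hφ : ∀ w ∉ C.top l.toFinset, C.IsCell (insert w l.toFinset) → φ (w :: l) = 0) :
    C.boundary φ l = ∑ w ∈ C.top l.toFinset \ l.toFinset, φ (w :: l) := by
  rw [boundary_apply φ hc]
  refine (sum_subset (fun w hw ↦ ?_) fun w hw hw' ↦ ?_).symm
  · rw [mem_sdiff] at hw
    exact (C.mem_coface hc).2 ⟨hw.2, (C.of_mem_Icc hc (insert_mem_Icc hc hw.1)).1⟩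
  · rw [C.mem_coface hc] at hw
    exact hφ w (fun h ↦ hw' (mem_sdiff.2 ⟨h, hw.1⟩)) hw.2

theorem boundary_eq_sum_top_of_vanishesBelow (hc : C.IsCell l.toFinset)
    (hφ : C.VanishesBelow (C.rank (C.top l.toFinset)) φ) :
    C.boundary φ l = ∑ w ∈ C.top l.toFinset \ l.toFinset, φ (w :: l) :=
  boundary_eq_sum_top hc fun w hw hcw ↦
    hφ (w :: l) (by simpa using hcw) (by simpa using C.rank_lt hc hcw hw)

theorem boundary_contraction_eq_sum_top (hc : C.IsCell l.toFinset)
    (hφ : C.VanishesBelow (C.rank (C.top l.toFinset)) φ) :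
    C.boundary (C.contraction φ) l =
      ∑ w ∈ C.top l.toFinset \ l.toFinset, C.contraction φ (w :: l) :=
  boundary_eq_sum_top hc fun w hw hcw ↦
    contraction_eq_zero hφ (by simpa using C.rank_lt hc hcw hw)

theorem boundary_contraction_add_of_notMem (hc : C.IsCell l.toFinset) (hl : l.Nodup)
    (hφ : C.VanishesBelow (C.rank (C.top l.toFinset)) φ)
    (he : C.pivot l.toFinset = some e) (hel : e ∉ l) :
    C.boundary (C.contraction φ) l + C.contraction (C.boundary φ) l = φ l := by
  have hpiv : ∀ w ∈ C.top l.toFinset \ l.toFinset, C.pivot (w :: l).toFinset = some e :=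
    fun w hw ↦ by
      rw [List.toFinset_cons, pivot_congr hc (insert_mem_Icc hc (mem_sdiff.1 hw).1), he]
  have hetop : e ∈ C.top l.toFinset \ l.toFinset :=
    mem_sdiff.2 ⟨(pivot_eq_some he).2.1, by simpa using hel⟩
  rw [boundary_contraction_eq_sum_top hc hφ, contraction_apply he,
    signedErase_of_notMem _ hel, add_zero, sum_eq_single_of_mem e hetop fun w hw hwe ↦ ?_,
    contraction_apply (hpiv e hetop), signedErase_cons_self φ (List.nodup_cons.2 ⟨hel, hl⟩)]
  rw [contraction_apply (hpiv w hw)]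
  exact signedErase_of_notMem φ fun h ↦ (List.mem_cons.1 h).elim (fun h ↦ hwe h.symm) hel

theorem boundary_contraction_add_of_mem (hc : C.IsCell l.toFinset) (hl : l.Nodup)
    (halt : IsAlternating φ) (hφ : C.VanishesBelow (C.rank (C.top l.toFinset)) φ)
    (he : C.pivot l.toFinset = some e) (hel : e ∈ l) :
    C.boundary (C.contraction φ) l + C.contraction (C.boundary φ) l = φ l := by
  obtain ⟨hcell, -, htop⟩ := C.of_mem_Icc hc (erase_pivot_mem_Icc he)
  have hnot : e ∉ C.top l.toFinset \ l.toFinset := by simp [hel]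
  have hset : C.top l.toFinset \ l.toFinset.erase e =
      insert e (C.top l.toFinset \ l.toFinset) :=
    sdiff_erase (pivot_eq_some he).2.1
  rw [← toFinset_erase_of_nodup hl] at hcell htop hset
  have hsum : ∀ w ∈ C.top l.toFinset \ l.toFinset,
      C.contraction φ (w :: l) = -((-1) ^ l.idxOf e * φ (w :: l.erase e)) := fun w hw ↦ by
    have hwl : w ∉ l := by simpa using (mem_sdiff.1 hw).2
    rw [contraction_apply (e := e) (by
        rw [List.toFinset_cons, pivot_congr hc (insert_mem_Icc hc (mem_sdiff.1 hw).1), he]),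
      signedErase_cons_of_ne φ (ne_of_mem_of_not_mem hel hwl).symm hel
        (List.nodup_cons.2 ⟨hwl, hl⟩)]
  rw [boundary_contraction_eq_sum_top hc hφ, sum_congr rfl hsum, contraction_apply he,
    signedErase, if_pos ⟨hel, hl⟩,
    boundary_eq_sum_top_of_vanishesBelow hcell (htop ▸ hφ), htop, hset, sum_insert hnot,
    halt.eq_neg_one_pow_mul_cons_erase hel, sum_neg_distrib, ← mul_sum]
  ring

theorem boundary_contraction_add (hc : C.IsCell l.toFinset) (hl : l.Nodup)
    (halt : IsAlternating φ) (hφ : C.VanishesBelow (C.rank (C.top l.toFinset)) φ)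
    (hbase : l.toFinset ≠ C.base) :
    C.boundary (C.contraction φ) l + C.contraction (C.boundary φ) l = φ l := by
  cases he : C.pivot l.toFinset with
  | none => exact absurd (eq_base_of_pivot_eq_none hc he) hbase
  | some e =>
    by_cases hel : e ∈ l
    · exact boundary_contraction_add_of_mem hc hl halt hφ he hel
    · exact boundary_contraction_add_of_notMem hc hl hφ he hel

end Contraction

section Exactness

variable {z : List X → R}

variable (C) in
/-- What is left of the cycle `z` after correcting it by boundaries on the cells of rank `< n`. -/
noncomputable def residual (z : List X → R) : ℕ → List X → R
  | 0 => z
  | n + 1 => residual z n - C.boundary (C.contraction (residual z n))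

theorem boundary_eq_zero_of_toFinset_eq_base (h : l.toFinset = C.base) (φ : List X → R) :
    C.boundary φ l = 0 := by
  by_cases hc : C.IsCell l.toFinset
  · rw [boundary_apply φ hc, h, C.coface_base, sum_empty]
  · exact boundary_apply_of_not_isCell φ hc

theorem contraction_zero : C.contraction (0 : List X → R) = 0 := by
  ext l
  by_contra h
  obtain ⟨e, -, -, -, hne⟩ := exists_pivot_of_contraction_ne_zero h
  exact hne rfl

theorem residual_spec (hz : z ∈ C.chains R j) (hd : C.boundary z = 0)
    (hbase : ∀ l : List X, l.toFinset = C.base → z l = 0) (n : ℕ) :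
    C.residual z n ∈ C.chains R j ∧ C.boundary (C.residual z n) = 0 ∧
      (∀ l : List X, l.toFinset = C.base → C.residual z n l = 0) ∧
      C.VanishesBelow n (C.residual z n) := by
  induction n with
  | zero => exact ⟨hz, hd, hbase, fun l _ hl ↦ absurd hl (Nat.not_lt_zero _)⟩
  | succ n ih =>
    obtain ⟨hmem, hd', hbase', hvan⟩ := ih
    have hmem' := boundary_mem_chains (contraction_mem_chains hmem)
    refine ⟨sub_mem hmem hmem', ?_, fun l hl ↦ ?_, fun l hc hl ↦ ?_⟩
    · rw [residual, map_sub, hd', boundary_boundary (contraction_mem_chains hmem).1, sub_zero]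
    · rw [residual, Pi.sub_apply, hbase' l hl, boundary_eq_zero_of_toFinset_eq_base hl, sub_zero]
    · rw [residual, Pi.sub_apply, sub_eq_zero]
      by_cases hb : l.toFinset = C.base
      · rw [hbase' l hb, boundary_eq_zero_of_toFinset_eq_base hb]
      by_cases hnodup : l.Nodup
      · have h := boundary_contraction_add hc hnodup hmem.1
          (fun l' hl' hr ↦ hvan l' hl' (by omega)) hb
        rwa [hd', contraction_zero, Pi.zero_apply, add_zero, eq_comm] at h
      · rw [not_imp_comm.1 (fun h ↦ (hmem.2 l h).1) hnodup,
          not_imp_comm.1 (fun h ↦ (hmem'.2 l h).1) hnodup]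

theorem sum_boundary_contraction_residual (z : List X → R) (N : ℕ) :
    ∑ n ∈ range N, C.boundary (C.contraction (C.residual z n)) = z - C.residual z N := by
  induction N with
  | zero => simp [residual]
  | succ N ih => rw [sum_range_succ, ih, residual]; abel

/-- The filling is a locally finite sum: at each cell only the residuals of index at most the rank
contribute. -/
theorem exists_boundary_eq (hz : z ∈ C.chains R j) (hd : C.boundary z = 0)
    (hbase : ∀ l : List X, l.toFinset = C.base → z l = 0) :
    ∃ ψ ∈ C.chains R (j + 1), C.boundary ψ = z := by
  have hres := residual_spec hz hd hbase
  have hmem := fun n ↦ contraction_mem_chains (hres n).1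
  set ψ : List X → R := fun l ↦
    ∑ n ∈ range (C.rank (C.top l.toFinset) + 1), C.contraction (C.residual z n) l with hψ
  have hψ_eq : ∀ (l : List X) (N : ℕ), C.rank (C.top l.toFinset) < N →
      ψ l = ∑ n ∈ range N, C.contraction (C.residual z n) l := fun l N hN ↦
    sum_subset (range_subset_range.2 hN) fun n _ hn ↦
      contraction_eq_zero (hres n).2.2.2 (by simpa using hn)
  refine ⟨ψ, ⟨fun p a b q ↦ ?_, fun l hl ↦ ?_⟩, funext fun l ↦ ?_⟩
  · simp only [hψ]
    rw [List.toFinset_eq_of_perm _ _ ((List.Perm.swap b a q).append_left p), ← sum_neg_distrib]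
    exact sum_congr rfl fun n _ ↦ (hmem n).1 p a b q
  · obtain ⟨n, -, hn⟩ := exists_ne_zero_of_sum_ne_zero hl
    exact (hmem n).2 l hn
  by_cases hc : C.IsCell l.toFinset
  swap
  · rw [boundary_apply_of_not_isCell _ hc, eq_comm]
    exact not_imp_comm.1 (fun h ↦ (hz.2 l h).2.1) hc
  obtain ⟨N, hN⟩ : ∃ N, ∀ w ∈ insert l ((C.coface l.toFinset).image (· :: l)),
      C.rank (C.top w.toFinset) < N :=
    ⟨_, fun w hw ↦ Nat.lt_succ_of_le (le_sup (f := fun w ↦ C.rank (C.top w.toFinset)) hw)⟩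
  simp only [mem_insert, mem_image, forall_eq_or_imp, forall_exists_index, and_imp,
    forall_apply_eq_imp_iff₂] at hN
  have htel := congrFun (sum_boundary_contraction_residual (C := C) z N) l
  rw [Finset.sum_apply, Pi.sub_apply, (hres N).2.2.2 l hc hN.1, sub_zero] at htel
  rw [boundary_apply _ hc, sum_congr rfl fun w hw ↦ hψ_eq (w :: l) N (hN.2 w hw), sum_comm, ← htel]
  exact sum_congr rfl fun n _ ↦ (boundary_apply _ hc).symm

theorem exists_boundary_eq_of_lt (hj : j < C.base.card) (hz : z ∈ C.chains R j)
    (hd : C.boundary z = 0) : ∃ ψ ∈ C.chains R (j + 1), C.boundary ψ = z := by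
  refine exists_boundary_eq hz hd fun l hl ↦ by_contra fun hne ↦ hj.ne' ?_
  obtain ⟨hnodup, -, hlen⟩ := hz.2 l hne
  rw [← hl, List.toFinset_card_of_nodup hnodup, hlen]

theorem eq_zero_of_apply_eq_zero {k : ℕ} (hk : ∀ S, C.IsCell S → S.card ≤ k)
    (hz : z ∈ C.chains R k) (hd : C.boundary z = 0) (hl : l.toFinset = C.base) (hnodup : l.Nodup)
    (h0 : z l = 0) : z = 0 := by
  obtain ⟨ψ, hψ, rfl⟩ := exists_boundary_eq hz hd fun l' hl' ↦ by_contra fun hne ↦ hne <|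
    hz.1.eq_zero_of_perm (List.perm_of_nodup_nodup_toFinset_eq hnodup (hz.2 l' hne).1
      (hl.trans hl'.symm)) h0
  suffices ψ = 0 by rw [this, map_zero]
  ext l'
  by_contra hne
  obtain ⟨hnodup', hcell, hlen⟩ := hψ.2 l' hne
  have := hk _ hcell
  rw [List.toFinset_card_of_nodup hnodup', hlen] at this
  omega

end Exactness

end ShelledComplex

/-- A complete simplicial fan modelled on Voronoi's fan of perfect forms. The `maximal` cones are
recorded by the sets of their rays; `Spans` singles out the sets of rays whose cone meets the
interior. For a fixed generic point `q`, `height s` is the value at `q` of the linear form `φ_s` of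
the cone `s`, `coeff s w` are the coordinates of `q` in the basis `s`, and `excess s w` is the
difference between `φ_s w` and the common value of `φ_s` on the rays of `s`. -/
structure VoronoiFan (X : Type*) [DecidableEq X] where
  maximal : Set (Finset X)
  maximal_nonempty : maximal.Nonempty
  dim : ℕ
  card_eq : ∀ {s}, s ∈ maximal → s.card = dim
  Spans : Finset X → Prop
  spans_mono : ∀ {S T}, S ⊆ T → Spans S → Spans T
  excess : Finset X → X → ℝ
  excess_eq_zero : ∀ {s w}, s ∈ maximal → w ∈ s → excess s w = 0
  excess_pos : ∀ {s s' w}, s ∈ maximal → s' ∈ maximal → w ∈ s' → w ∉ s → 0 < excess s w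
  coeff : Finset X → X → ℝ
  coeff_ne_zero : ∀ {s w}, s ∈ maximal → w ∈ s → coeff s w ≠ 0
  spans_coeff_pos : ∀ {s}, s ∈ maximal → Spans (s.filter (0 < coeff s ·))
  height : Finset X → ℝ
  height_sub : ∀ {s s'}, s ∈ maximal → s' ∈ maximal →
    height s' - height s = ∑ w ∈ s, coeff s w * excess s' w
  exists_flip : ∀ {s f}, s ∈ maximal → f ∈ s → Spans (s.erase f) →
    ∃ s' ∈ maximal, s.erase f ⊆ s' ∧ f ∉ s'
  finite_of_spans : ∀ {S}, Spans S → {s | s ∈ maximal ∧ S ⊆ s}.Finite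
  finite_height_le : ∀ c, {s | s ∈ maximal ∧ height s ≤ c}.Finite

namespace VoronoiFan

variable {X : Type*} [DecidableEq X] (V : VoronoiFan X)

/-- The cells: the cones that meet the interior. -/
def IsCell (S : Finset X) : Prop := V.Spans S ∧ ∃ s ∈ V.maximal, S ⊆ s

/-- The rays of `s` along which the generic point lies on the far side of the opposite facet. -/
noncomputable def negRays (s : Finset X) : Finset X := s.filter (V.coeff s · < 0)

variable {V} {S s s' : Finset X} {f w : X}

theorem mem_negRays : w ∈ V.negRays s ↔ w ∈ s ∧ V.coeff s w < 0 := mem_filter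

theorem excess_nonneg (hs : s ∈ V.maximal) (hs' : s' ∈ V.maximal) (hw : w ∈ s) :
    0 ≤ V.excess s' w := by
  by_cases h : w ∈ s'
  · exact (V.excess_eq_zero hs' h).ge
  · exact (V.excess_pos hs' hs hw h).le

theorem exists_mem_notMem (hs : s ∈ V.maximal) (hs' : s' ∈ V.maximal) (hne : s' ≠ s) :
    ∃ w ∈ s, w ∉ s' := by
  rw [← not_subset]
  exact fun h ↦ hne (eq_of_subset_of_card_le h (V.card_eq hs' ▸ V.card_eq hs).ge).symm

theorem height_lt_of_sdiff_subset (hs : s ∈ V.maximal) (hs' : s' ∈ V.maximal)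
    (hneg : s \ S ⊆ V.negRays s) (hS : S ⊆ s') (hne : s' ≠ s) : V.height s' < V.height s := by
  rw [← sub_neg, V.height_sub hs hs']
  have hcoeff : ∀ {w}, w ∈ s → w ∉ S → V.coeff s w < 0 := fun hw hwS ↦
    (mem_negRays.1 (hneg (mem_sdiff.2 ⟨hw, hwS⟩))).2
  obtain ⟨w, hw, hw'⟩ := exists_mem_notMem hs hs' hne
  refine sum_neg' (fun w hw ↦ ?_)
    ⟨w, hw, mul_neg_of_neg_of_pos (hcoeff hw fun h ↦ hw' (hS h)) (V.excess_pos hs' hs hw hw')⟩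
  by_cases hwS : w ∈ S
  · rw [V.excess_eq_zero hs' (hS hwS), mul_zero]
  · exact mul_nonpos_of_nonpos_of_nonneg (hcoeff hw hwS).le (excess_nonneg hs hs' hw)

theorem height_lt_of_negRays_eq_empty (hs : s ∈ V.maximal) (hs' : s' ∈ V.maximal)
    (hneg : V.negRays s = ∅) (hne : s' ≠ s) : V.height s < V.height s' := by
  have hpos : ∀ w ∈ s, 0 < V.coeff s w := fun w hw ↦
    (V.coeff_ne_zero hs hw).lt_or_gt.resolve_left fun h ↦
      notMem_empty w (hneg ▸ mem_negRays.2 ⟨hw, h⟩)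
  rw [← sub_pos, V.height_sub hs hs']
  obtain ⟨w, hw, hw'⟩ := exists_mem_notMem hs hs' hne
  exact sum_pos' (fun w hw ↦ mul_nonneg (hpos w hw).le (excess_nonneg hs hs' hw))
    ⟨w, hw, mul_pos (hpos w hw) (V.excess_pos hs' hs hw hw')⟩

theorem exists_flip_height (hs : s ∈ V.maximal) (hf : f ∈ s) (hspan : V.Spans (s.erase f)) :
    ∃ s' ∈ V.maximal, s.erase f ⊆ s' ∧
      ∃ c > 0, V.height s' - V.height s = V.coeff s f * c := by
  obtain ⟨s', hs', hsub, hfs'⟩ := V.exists_flip hs hf hspan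
  refine ⟨s', hs', hsub, V.excess s' f, V.excess_pos hs' hs hf hfs', ?_⟩
  rw [V.height_sub hs hs', sum_eq_single_of_mem f hf fun w hw hwf ↦ ?_]
  rw [V.excess_eq_zero hs' (hsub (mem_erase.2 ⟨hwf, hw⟩)), mul_zero]

theorem exists_sdiff_subset_negRays (hS : V.IsCell S) :
    ∃ s ∈ V.maximal, S ⊆ s ∧ s \ S ⊆ V.negRays s := by
  obtain ⟨s, ⟨hs, hSs⟩, hmax⟩ := Set.exists_max_image {s | s ∈ V.maximal ∧ S ⊆ s} V.height
    (V.finite_of_spans hS.1) hS.2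
  refine ⟨s, hs, hSs, fun f hf ↦ ?_⟩
  rw [mem_sdiff] at hf
  have hsub : S ⊆ s.erase f := subset_erase.2 ⟨hSs, hf.2⟩
  obtain ⟨s', hs', hsub', c, hc, h⟩ := exists_flip_height hs hf.1 (V.spans_mono hsub hS.1)
  have hle := hmax s' ⟨hs', hsub.trans hsub'⟩
  exact mem_negRays.2 ⟨hf.1, (V.coeff_ne_zero hs hf.1).lt_or_gt.resolve_right fun hpos ↦ by
    linarith [mul_pos hpos hc]⟩

open Classical in
variable (V) in
/-- The highest maximal cone containing the cell `S`. -/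
noncomputable def top (S : Finset X) : Finset X :=
  if h : V.IsCell S then (exists_sdiff_subset_negRays h).choose else ∅

theorem top_spec (hS : V.IsCell S) :
    V.top S ∈ V.maximal ∧ S ⊆ V.top S ∧ V.top S \ S ⊆ V.negRays (V.top S) := by
  rw [top, dif_pos hS]
  exact (exists_sdiff_subset_negRays hS).choose_spec

theorem top_eq (hS : V.IsCell S) (hs : s ∈ V.maximal) (hsub : S ⊆ s)
    (hneg : s \ S ⊆ V.negRays s) : V.top S = s := by
  obtain ⟨htop, hsub', hneg'⟩ := top_spec hS
  by_contra hne
  exact (height_lt_of_sdiff_subset hs htop hneg hsub' hne).asymm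
    (height_lt_of_sdiff_subset htop hs hneg' hsub (Ne.symm hne))

theorem isCell_and_top_eq (hs : s ∈ V.maximal) (hS : S ∈ Icc (s \ V.negRays s) s) :
    V.IsCell S ∧ V.top S = s := by
  rw [Finset.mem_Icc, sdiff_le_comm] at hS
  have hcell : V.IsCell S := by
    refine ⟨V.spans_mono (fun w hw ↦ ?_) (V.spans_coeff_pos hs), s, hs, hS.2⟩
    rw [mem_filter] at hw
    by_contra hwS
    exact (mem_negRays.1 (hS.1 (mem_sdiff.2 ⟨hw.1, hwS⟩))).2.asymm hw.2
  exact ⟨hcell, top_eq hcell hs hS.2 hS.1⟩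

variable (V) in
theorem exists_negRays_eq_empty : ∃ s ∈ V.maximal, V.negRays s = ∅ := by
  obtain ⟨s₁, hs₁⟩ := V.maximal_nonempty
  obtain ⟨s, ⟨hs, hle⟩, hmin⟩ := Set.exists_min_image
    {s | s ∈ V.maximal ∧ V.height s ≤ V.height s₁} V.height (V.finite_height_le _) ⟨s₁, hs₁, le_rfl⟩
  refine ⟨s, hs, eq_empty_of_forall_notMem fun f hf ↦ ?_⟩
  obtain ⟨hfs, hneg⟩ := mem_negRays.1 hf
  have hspan : V.Spans (s.erase f) := V.spans_mono
    (subset_erase.2 ⟨filter_subset _ _, fun h ↦ hneg.asymm (mem_filter.1 h).2⟩)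
    (V.spans_coeff_pos hs)
  obtain ⟨s', hs', -, c, hc, h⟩ := exists_flip_height hs hfs hspan
  have := mul_neg_of_neg_of_pos hneg hc
  linarith [hmin s' ⟨hs', by linarith⟩]

variable (V) in
/-- The maximal cone containing the generic point. -/
noncomputable def base : Finset X := V.exists_negRays_eq_empty.choose

variable (V) in
theorem base_spec : V.base ∈ V.maximal ∧ V.negRays V.base = ∅ :=
  V.exists_negRays_eq_empty.choose_spec

theorem eq_base (hs : s ∈ V.maximal) (hneg : V.negRays s = ∅) : s = V.base := by
  obtain ⟨hbase, hneg'⟩ := V.base_spec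
  by_contra hne
  exact (height_lt_of_negRays_eq_empty hs hbase hneg (Ne.symm hne)).asymm
    (height_lt_of_negRays_eq_empty hbase hs hneg' hne)

theorem IsCell.card_le (hS : V.IsCell S) : S.card ≤ V.dim := by
  obtain ⟨-, s, hs, h⟩ := hS
  exact V.card_eq hs ▸ card_le_card h

theorem finite_coface (hS : V.IsCell S) : {w | w ∉ S ∧ V.IsCell (insert w S)}.Finite := by
  refine ((V.finite_of_spans hS.1).biUnion fun s _ ↦ s.finite_toSet).subset ?_
  rintro w ⟨-, -, s, hs, hsub⟩
  rw [insert_subset_iff] at hsub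
  exact Set.mem_iUnion₂.2 ⟨s, ⟨hs, hsub.2⟩, hsub.1⟩

open Classical in
variable (V) in
/-- The rays spanning a larger cell together with the cell `S`. -/
noncomputable def coface (S : Finset X) : Finset X :=
  if h : V.IsCell S then (finite_coface h).toFinset else ∅

theorem mem_coface (hS : V.IsCell S) : w ∈ V.coface S ↔ w ∉ S ∧ V.IsCell (insert w S) := by
  rw [coface, dif_pos hS, Set.Finite.mem_toFinset, Set.mem_ofPred_eq]

theorem coface_eq_empty (hs : s ∈ V.maximal) : V.coface s = ∅ := by
  refine eq_empty_of_forall_notMem fun w hw ↦ ?_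
  have hcell : V.IsCell s := (isCell_and_top_eq hs (right_mem_Icc.2 sdiff_subset)).1
  rw [mem_coface hcell] at hw
  have := hw.2.card_le
  rw [card_insert_of_notMem hw.1, V.card_eq hs] at this
  omega

theorem height_top_insert_lt (hS : V.IsCell S) (hw : V.IsCell (insert w S)) (hwt : w ∉ V.top S) :
    V.height (V.top (insert w S)) < V.height (V.top S) := by
  obtain ⟨htop, -, hneg⟩ := top_spec hS
  obtain ⟨htop', hsub', -⟩ := top_spec hw
  rw [insert_subset_iff] at hsub'
  exact height_lt_of_sdiff_subset htop htop' hneg hsub'.2 fun h ↦ hwt (h ▸ hsub'.1)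

variable (V) in
/-- The cells of the fan, shelled by decreasing height. -/
noncomputable def shelling : ShelledComplex X where
  IsCell := V.IsCell
  ordConnected := ⟨fun _ hS _ ⟨_, s, hs, hsub⟩ _ hT ↦
    ⟨V.spans_mono hT.1 hS.1, s, hs, hT.2.trans hsub⟩⟩
  coface := V.coface
  mem_coface := mem_coface
  bot S := V.top S \ V.negRays (V.top S)
  top := V.top
  mem_Icc hS := by
    obtain ⟨-, hsub, hneg⟩ := top_spec hS
    exact Finset.mem_Icc.2 ⟨sdiff_le_comm.1 hneg, hsub⟩
  of_mem_Icc hS hT := by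
    obtain ⟨hcell, htop⟩ := isCell_and_top_eq (top_spec hS).1 hT
    rw [htop]
    exact ⟨hcell, rfl, rfl⟩
  rank s := {s' | s' ∈ V.maximal ∧ V.height s' < V.height s}.ncard
  rank_lt {S w} hS hw hwt := by
    have hlt := height_top_insert_lt hS hw hwt
    refine Set.ncard_lt_ncard ⟨fun s hs ↦ ⟨hs.1, hs.2.trans hlt⟩, fun h ↦ ?_⟩
      ((V.finite_height_le (V.height (V.top S))).subset fun s hs ↦ ⟨hs.1, hs.2.le⟩)
    exact lt_irrefl _ (h ⟨(top_spec hw).1, hlt⟩).2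
  base := V.base
  top_eq_base hS h := eq_base (top_spec hS).1 <| by
    rw [Finset.sdiff_eq_self_iff_disjoint] at h
    exact disjoint_self.1 (h.mono_left (filter_subset _ _))
  coface_base := coface_eq_empty V.base_spec.1

end VoronoiFan

section Forms

open Matrix

/-- Square integer matrices. -/
abbrev IntMat (n : ℕ) := Matrix (Fin n) (Fin n) ℤ

/-- The action of invertible matrices on bilinear forms by congruence, `A ↦ g A gᵀ`. -/
def congruence (n : ℕ) : Representation ℤ (IntMat n)ˣ (IntMat n) where
  toFun g := LinearMap.mulLeft ℤ g.val ∘ₗ LinearMap.mulRight ℤ g.valᵀ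
  map_one' := by ext1 A; simp
  map_mul' g h := by ext1 A; simp [Matrix.mul_assoc]

/-- The rank-one form `u uᵀ`. -/
def rankOne {n : ℕ} (u : Fin n → ℤ) : IntMat n := vecMulVec u u

/-- The evaluation of forms at a vector, `A ↦ xᵀ A x`. -/
def evalForm {n : ℕ} (x : Fin n → ℤ) : IntMat n →ₗ[ℤ] ℤ where
  toFun A := x ⬝ᵥ A *ᵥ x
  map_add' A B := by rw [add_mulVec, dotProduct_add]
  map_smul' c A := by rw [smul_mulVec, dotProduct_smul, RingHom.id_apply]

/-- A set of positive semidefinite forms is spanning if no nonzero vector is isotropic for all of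
them, that is, if the cone it generates contains a positive definite form. -/
def IsSpanning {n : ℕ} (S : Finset (IntMat n)) : Prop :=
  ∀ x : Fin n → ℤ, (∀ A ∈ S, evalForm x A = 0) → x = 0

variable {n : ℕ}

theorem congruence_rankOne (g : (IntMat n)ˣ) (u : Fin n → ℤ) :
    congruence n g (rankOne u) = rankOne (g.val *ᵥ u) := by
  change g.val * (vecMulVec u u * g.valᵀ) = _
  rw [vecMulVec_mul, mul_vecMulVec, vecMul_transpose, rankOne]

theorem evalForm_rankOne (x u : Fin n → ℤ) : evalForm x (rankOne u) = (u ⬝ᵥ x) ^ 2 := by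
  change x ⬝ᵥ vecMulVec u u *ᵥ x = _
  rw [vecMulVec_mulVec, dotProduct_smul, dotProduct_comm x u, pow_two]
  rfl

theorem IsSpanning.mono {S T : Finset (IntMat n)} (h : S ⊆ T) (hS : IsSpanning S) : IsSpanning T :=
  fun x hx ↦ hS x fun A hA ↦ hx A (h hA)

theorem IsSpanning.matrix_eq {S : Finset (IntMat n)} (hS : IsSpanning S) {M N : IntMat n}
    (h : ∀ A ∈ S, ∃ v, A = rankOne v ∧ M *ᵥ v = N *ᵥ v) : M = N := by
  refine funext fun i ↦ sub_eq_zero.1 <| hS (M i - N i) fun A hA ↦ ?_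
  obtain ⟨v, rfl, hv⟩ := h A hA
  rw [evalForm_rankOne, dotProduct_comm, sub_dotProduct, pow_eq_zero_iff two_ne_zero, sub_eq_zero]
  exact congrFun hv i

theorem exists_pos_linearIndependent_int (k : ℕ) :
    ∃ c : Fin k → ℝ, (∀ i, 0 < c i) ∧ LinearIndependent ℤ c := by
  obtain ⟨x, hx₀, hx⟩ : ∃ x : ℝ, 0 < x ∧ Transcendental ℤ x := by
    have h := transcendental_liouvilleNumber (m := 2) le_rfl
    exact ⟨_, sq_pos_of_ne_zero fun h₀ ↦ h (by rw [h₀]; exact isAlgebraic_zero),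
      h.pow two_pos⟩
  refine ⟨fun i ↦ x ^ (i : ℕ), fun i ↦ pow_pos hx₀ _, ?_⟩
  refine Fintype.linearIndependent_iff.2 fun a ha i ↦ ?_
  have hp : ∑ i : Fin k, Polynomial.monomial (i : ℕ) (a i) = 0 :=
    transcendental_iff.1 hx _ (by simpa [Polynomial.aeval_monomial] using ha)
  simpa [Polynomial.finsetSum_coeff, Polynomial.coeff_monomial, Fin.val_inj] using
    congrArg (Polynomial.coeff · i) hp

/-- A perfect quadratic form with minimum `2` whose minimal vectors `± root i` give a basis of the
symmetric matrices; `form` is the linear extension to matrices, so that `form (u uᵀ)` is the value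
at `u`, and `coord` are the coordinates in the basis. By `exists_flip`, each facet of the cone on
the minimal vectors is shared with a translate of that cone. -/
structure PerfectForm (n k : ℕ) where
  root : Fin k → Fin n → ℤ
  coord : IntMat n →ₗ[ℤ] Fin k → ℤ
  form : IntMat n →ₗ[ℤ] ℤ
  sum_coord_smul : ∀ u, ∑ i, coord (rankOne u) i • rankOne (root i) = rankOne u
  coord_root : ∀ i, coord (rankOne (root i)) = Pi.single i 1
  form_root : ∀ i, form (rankOne (root i)) = 2
  exists_root : ∀ {u}, u ≠ 0 → form (rankOne u) ≤ 2 → ∃ i, rankOne u = rankOne (root i)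
  sq_le_form : ∀ u i, u i ^ 2 ≤ form (rankOne u)
  eq_zero_of_dotProduct : ∀ x, (∀ i, root i ⬝ᵥ x = 0) → x = 0
  exists_flip : ∀ i, ∃ g : (IntMat n)ˣ,
    (∀ j ≠ i, ∃ m, congruence n g (rankOne (root m)) = rankOne (root j)) ∧
      ∀ m, congruence n g (rankOne (root m)) ≠ rankOne (root i)

namespace PerfectForm

variable {k : ℕ} (P : PerfectForm n k)

/-- The minimal vectors as rank-one forms: the rays of the Voronoi cone of `P`. -/
def ray (i : Fin k) : IntMat n := rankOne (P.root i)

/-- The rays of the translate by `g` of the Voronoi cone of `P`. -/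
def cone (g : (IntMat n)ˣ) : Finset (IntMat n) := univ.image fun i ↦ congruence n g (P.ray i)

/-- The linear form taking the value `2` on the rays of `P.cone g`. -/
def normal (g : (IntMat n)ˣ) : IntMat n →ₗ[ℤ] ℤ := P.form ∘ₗ congruence n g⁻¹

variable {P} {g : (IntMat n)ˣ} {w : IntMat n} {S : Finset (IntMat n)}

theorem mem_cone : w ∈ P.cone g ↔ ∃ i, congruence n g (P.ray i) = w := by simp [cone]

theorem congruence_ray_mem_cone (g : (IntMat n)ˣ) (i : Fin k) :
    congruence n g (P.ray i) ∈ P.cone g :=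
  mem_cone.2 ⟨i, rfl⟩

theorem coord_ray (i : Fin k) : P.coord (P.ray i) = Pi.single i 1 := P.coord_root i

theorem form_ray (i : Fin k) : P.form (P.ray i) = 2 := P.form_root i

variable (P) in
theorem ray_injective : Function.Injective P.ray := fun i j h ↦ by
  have := congrFun (congrArg P.coord h) j
  by_contra hne
  rw [coord_ray, coord_ray, Pi.single_eq_same, Pi.single_eq_of_ne (Ne.symm hne)] at this
  exact zero_ne_one this

variable (P) in
theorem congruence_ray_injective (g : (IntMat n)ˣ) :
    Function.Injective fun i ↦ congruence n g (P.ray i) :=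
  ((congruence n).apply_bijective g).injective.comp P.ray_injective

theorem sum_cone {M : Type*} [AddCommMonoid M] (g : (IntMat n)ˣ) (f : IntMat n → M) :
    ∑ w ∈ P.cone g, f w = ∑ i, f (congruence n g (P.ray i)) :=
  sum_image (P.congruence_ray_injective g).injOn

theorem card_cone (g : (IntMat n)ˣ) : (P.cone g).card = k := by
  rw [cone, card_image_of_injective _ (P.congruence_ray_injective g), card_univ, Fintype.card_fin]

theorem cone_mul (g h : (IntMat n)ˣ) : P.cone (g * h) = (P.cone h).image (congruence n g) := by
  simp only [cone, image_image]
  congr 1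
  ext1 i
  rw [Function.comp_apply, map_mul, Module.End.mul_apply]

theorem sum_coord_smul_ray (g : (IntMat n)ˣ) (i : Fin k) :
    ∑ j, P.coord (congruence n g (P.ray i)) j • P.ray j = congruence n g (P.ray i) := by
  rw [ray, congruence_rankOne]
  exact P.sum_coord_smul _

theorem exists_rankOne_of_mem_cone (h : w ∈ P.cone g) : ∃ v ≠ 0, w = rankOne v := by
  obtain ⟨i, rfl⟩ := mem_cone.1 h
  refine ⟨g.val *ᵥ P.root i, fun h₀ ↦ ?_, congruence_rankOne _ _⟩
  have hray : P.ray i = 0 := ((congruence n).apply_bijective g).injective <| by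
    rw [ray, congruence_rankOne, h₀, rankOne, vecMulVec_zero, map_zero]
  simpa [hray] using P.form_ray i

theorem normal_of_mem_cone (h : w ∈ P.cone g) : P.normal g w = 2 := by
  obtain ⟨i, rfl⟩ := mem_cone.1 h
  rw [normal, LinearMap.comp_apply, Representation.inv_self_apply, form_ray]

theorem two_lt_normal {v : Fin n → ℤ} (hv : v ≠ 0) (h : rankOne v ∉ P.cone g) :
    2 < P.normal g (rankOne v) := by
  by_contra! hle
  rw [normal, LinearMap.comp_apply, congruence_rankOne] at hle
  have hne : (g⁻¹).val *ᵥ v ≠ 0 := fun h₀ ↦ hv <| by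
    rw [← one_mulVec v, ← Units.val_one, ← mul_inv_cancel g, Units.val_mul, ← mulVec_mulVec, h₀,
      mulVec_zero]
  obtain ⟨i, hi⟩ := P.exists_root hne hle
  rw [← congruence_rankOne] at hi
  exact h (mem_cone.2 ⟨i, by rw [ray, ← hi, Representation.self_inv_apply]⟩)

variable (P) in
theorem form_rankOne_nonneg (u : Fin n → ℤ) : 0 ≤ P.form (rankOne u) := by
  rcases isEmpty_or_nonempty (Fin n) with _ | ⟨⟨i⟩⟩
  · rw [Subsingleton.elim (rankOne u) 0, map_zero]
  · exact (sq_nonneg _).trans (P.sq_le_form u i)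

theorem normal_ray_nonneg (g : (IntMat n)ˣ) (i : Fin k) : 0 ≤ P.normal g (P.ray i) := by
  rw [normal, LinearMap.comp_apply, ray, congruence_rankOne]
  exact P.form_rankOne_nonneg _

variable (P)

theorem isSpanning_rays : IsSpanning (univ.image P.ray) := fun x hx ↦
  P.eq_zero_of_dotProduct x fun i ↦ by
    have := hx _ (mem_image_of_mem P.ray (mem_univ i))
    rwa [ray, evalForm_rankOne, pow_eq_zero_iff two_ne_zero] at this

theorem finite_form_le (c : ℤ) : {u | P.form (rankOne u) ≤ c}.Finite := by
  refine (Set.finite_Icc (fun _ ↦ -c) (fun _ ↦ c)).subset fun u (hu : _ ≤ c) ↦ ?_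
  have habs : ∀ i, |u i| ≤ c := fun i ↦
    (((Int.le_self_sq _).trans_eq (sq_abs (u i))).trans (P.sq_le_form u i)).trans hu
  exact ⟨fun i ↦ (abs_le.1 (habs i)).1, fun i ↦ (abs_le.1 (habs i)).2⟩

theorem finite_normal_le (hS : IsSpanning S) (hrank : ∀ A ∈ S, ∃ v, A = rankOne v) (c : ℤ) :
    {g | ∀ A ∈ S, P.normal g A ≤ c}.Finite := by
  choose! v hv using hrank
  let f (g : (IntMat n)ˣ) (A : S) : Fin n → ℤ := (g⁻¹).val *ᵥ v A
  refine Set.Finite.subset (Set.Finite.preimage (f := f) (fun g _ g' _ h ↦ ?_)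
    (Set.Finite.pi' fun _ ↦ P.finite_form_le c)) fun (g : (IntMat n)ˣ) hg (A : S) ↦ ?_
  · exact inv_injective <| Units.ext <|
      hS.matrix_eq fun A hA ↦ ⟨v A, hv A hA, congrFun h ⟨A, hA⟩⟩
  · have := hg A A.2
    rwa [hv A A.2, normal, LinearMap.comp_apply, congruence_rankOne] at this

/-- Positive weights without integral relation: `∑ b, weight k b • P.ray b` is the generic point of
the fan of `P`. -/
noncomputable def weight (k : ℕ) : Fin k → ℝ := (exists_pos_linearIndependent_int k).choose

theorem weight_pos (b : Fin k) : 0 < weight k b :=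
  (exists_pos_linearIndependent_int k).choose_spec.1 b

theorem linearIndependent_weight : LinearIndependent ℤ (weight k) :=
  (exists_pos_linearIndependent_int k).choose_spec.2

/-- The value of an integral linear form at the generic point. -/
noncomputable def genericValue (f : IntMat n →ₗ[ℤ] ℤ) : ℝ := ∑ b, weight k b * f (P.ray b)

/-- The coordinates of the generic point with respect to the rays of `P.cone g`. -/
noncomputable def genericCoord (g : (IntMat n)ˣ) (i : Fin k) : ℝ :=
  ∑ b, weight k b * P.coord (congruence n g⁻¹ (P.ray b)) i

theorem sum_genericCoord_mul (g : (IntMat n)ˣ) (f : IntMat n →ₗ[ℤ] ℤ) :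
    ∑ i, P.genericCoord g i * f (congruence n g (P.ray i)) = P.genericValue f := by
  have hray (b : Fin k) : (f (P.ray b) : ℝ) =
      ∑ i, (P.coord (congruence n g⁻¹ (P.ray b)) i : ℝ) * f (congruence n g (P.ray i)) := by
    conv_lhs => rw [← (congruence n).self_inv_apply g (P.ray b), ← P.sum_coord_smul_ray g⁻¹ b]
    simp only [map_sum, map_smul, smul_eq_mul, Int.cast_sum, Int.cast_mul]
  simp only [genericCoord, genericValue, hray, sum_mul, mul_sum, mul_assoc]
  exact sum_comm

theorem genericCoord_ne_zero (g : (IntMat n)ˣ) (i : Fin k) : P.genericCoord g i ≠ 0 := fun h ↦ by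
  have hzero := Fintype.linearIndependent_iff.1 (linearIndependent_weight (k := k))
    (fun b ↦ P.coord (congruence n g⁻¹ (P.ray b)) i)
    (by simpa only [zsmul_eq_mul, mul_comm, genericCoord] using h)
  have hi : P.coord (P.ray i) i = 0 := by
    rw [← (congruence n).inv_self_apply g (P.ray i), ← P.sum_coord_smul_ray g i]
    simp only [map_sum, map_smul, Finset.sum_apply, Pi.smul_apply, hzero, smul_zero, sum_const_zero]
  simp [coord_ray] at hi

theorem finite_genericValue_normal_le (c : ℝ) :
    {g | P.genericValue (P.normal g) ≤ c}.Finite := by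
  have hweight (b : Fin k) : 0 ≤ |c| / weight k b := div_nonneg (abs_nonneg c) (weight_pos b).le
  refine (P.finite_normal_le P.isSpanning_rays (c := ∑ b : Fin k, ⌈|c| / weight k b⌉)
    fun A hA ↦ ?_).subset fun g (hg : _ ≤ c) A hA ↦ ?_
  all_goals obtain ⟨i, -, rfl⟩ := mem_image.1 hA
  · exact ⟨_, rfl⟩
  have hterm : weight k i * P.normal g (P.ray i) ≤ |c| :=
    (single_le_sum (f := fun b ↦ weight k b * (P.normal g (P.ray b) : ℝ)) (fun b _ ↦
      mul_nonneg (weight_pos b).le (Int.cast_nonneg (normal_ray_nonneg g b)))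
      (mem_univ i)).trans (hg.trans (le_abs_self c))
  rw [mul_comm, ← le_div_iff₀ (weight_pos i)] at hterm
  calc P.normal g (P.ray i) ≤ ⌈|c| / weight k i⌉ := Int.cast_le.1 (hterm.trans (Int.le_ceil _))
    _ ≤ _ := single_le_sum (f := fun b ↦ ⌈|c| / weight k b⌉)
      (fun b _ ↦ Int.ceil_nonneg (hweight b)) (mem_univ i)

theorem isSpanning_genericCoord_pos (g : (IntMat n)ˣ) :
    IsSpanning ((univ.filter (0 < P.genericCoord g ·)).image fun i ↦ congruence n g (P.ray i)) := by
  refine fun x hx ↦ P.isSpanning_rays x fun A hA ↦ ?_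
  obtain ⟨i, -, rfl⟩ := mem_image.1 hA
  have hnonneg (h : (IntMat n)ˣ) (j : Fin k) : 0 ≤ evalForm x (congruence n h (P.ray j)) := by
    rw [ray, congruence_rankOne, evalForm_rankOne]
    positivity
  have hterm (b : Fin k) : 0 ≤ weight k b * evalForm x (P.ray b) :=
    mul_nonneg (weight_pos b).le (Int.cast_nonneg (by simpa using hnonneg 1 b))
  have hle : P.genericValue (evalForm x) ≤ 0 := by
    rw [← P.sum_genericCoord_mul g]
    refine sum_nonpos fun j _ ↦ ?_
    rcases lt_or_ge 0 (P.genericCoord g j) with hj | hj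
    · rw [hx _ (mem_image_of_mem _ (mem_filter.2 ⟨mem_univ j, hj⟩)), Int.cast_zero, mul_zero]
    · exact mul_nonpos_of_nonpos_of_nonneg hj (Int.cast_nonneg (hnonneg g j))
  have hzero := (sum_eq_zero_iff_of_nonneg fun b _ ↦ hterm b).1
    (hle.antisymm (sum_nonneg fun b _ ↦ hterm b)) i (mem_univ i)
  exact Int.cast_eq_zero.1 ((mul_eq_zero.1 hzero).resolve_left (weight_pos i).ne')

/-- A translation carrying the cone of `P` to the cone with rays `s`; junk if there is none. -/
noncomputable def chart (s : Finset (IntMat n)) : (IntMat n)ˣ := Function.invFun P.cone s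

/-- The coordinate of the generic point at the ray `w` of the cone with rays `s`. -/
noncomputable def coeff (s : Finset (IntMat n)) (w : IntMat n) : ℝ :=
  ∑ i, P.coord (congruence n (P.chart s)⁻¹ w) i * P.genericCoord (P.chart s) i

variable {P} {s : Finset (IntMat n)}

theorem cone_chart (hs : s ∈ Set.range P.cone) : P.cone (P.chart s) = s := Function.invFun_eq hs

theorem coeff_ray (s : Finset (IntMat n)) (i : Fin k) :
    P.coeff s (congruence n (P.chart s) (P.ray i)) = P.genericCoord (P.chart s) i := by
  rw [coeff, Representation.inv_self_apply, coord_ray, sum_eq_single_of_mem i (mem_univ i)]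
  · simp
  · intro j _ hj
    simp [hj]

theorem sum_coeff_mul (hs : s ∈ Set.range P.cone) (f : IntMat n →ₗ[ℤ] ℤ) :
    ∑ w ∈ s, P.coeff s w * f w = P.genericValue f := by
  rw [← P.sum_genericCoord_mul (P.chart s) f]
  conv_lhs => rw [← cone_chart hs, sum_cone, cone_chart hs]
  simp only [coeff_ray]

variable (P) in
theorem isSpanning_coeff_pos (hs : s ∈ Set.range P.cone) :
    IsSpanning (s.filter (0 < P.coeff s ·)) := by
  refine (P.isSpanning_genericCoord_pos (P.chart s)).mono fun w hw ↦ ?_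
  obtain ⟨i, hi, rfl⟩ := mem_image.1 hw
  rw [mem_filter, coeff_ray]
  exact ⟨(cone_chart hs).subset (congruence_ray_mem_cone _ i), (mem_filter.1 hi).2⟩

theorem exists_cone_flip (hs : s ∈ Set.range P.cone) (hw : w ∈ s) :
    ∃ s' ∈ Set.range P.cone, s.erase w ⊆ s' ∧ w ∉ s' := by
  obtain ⟨g, rfl⟩ := hs
  obtain ⟨i, rfl⟩ := mem_cone.1 hw
  obtain ⟨h, hmem, hne⟩ := P.exists_flip i
  refine ⟨_, ⟨g * h, rfl⟩, fun w hw ↦ ?_, fun hmem' ↦ ?_⟩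
  · obtain ⟨hwi, hw⟩ := mem_erase.1 hw
    obtain ⟨j, rfl⟩ := mem_cone.1 hw
    obtain ⟨m, hm⟩ := hmem j (by rintro rfl; exact hwi rfl)
    exact mem_cone.2 ⟨m, by rw [map_mul, Module.End.mul_apply, ray, hm, ray]⟩
  · obtain ⟨m, hm⟩ := mem_cone.1 hmem'
    rw [map_mul, Module.End.mul_apply] at hm
    exact hne m (((congruence n).apply_bijective g).injective hm)

variable (P) in
theorem finite_cone_superset (hS : IsSpanning S) :
    {s | s ∈ Set.range P.cone ∧ S ⊆ s}.Finite := by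
  by_cases hrank : ∀ A ∈ S, ∃ v, A = rankOne v
  · refine ((P.finite_normal_le hS hrank 2).image P.cone).subset ?_
    rintro _ ⟨⟨g, rfl⟩, hsub⟩
    exact ⟨g, fun A hA ↦ (normal_of_mem_cone (hsub hA)).le, rfl⟩
  · convert Set.finite_empty
    refine Set.eq_empty_iff_forall_notMem.2 ?_
    rintro _ ⟨⟨g, rfl⟩, hsub⟩
    exact hrank fun A hA ↦ (exists_rankOne_of_mem_cone (hsub hA)).imp fun _ h ↦ h.2

variable (P) in
/-- The fan of translates of the Voronoi cone of `P`. -/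
noncomputable def fan : VoronoiFan (IntMat n) where
  maximal := Set.range P.cone
  maximal_nonempty := Set.range_nonempty _
  dim := k
  card_eq := by rintro _ ⟨g, rfl⟩; exact card_cone g
  Spans := IsSpanning
  spans_mono := IsSpanning.mono
  excess s w := P.normal (P.chart s) w - 2
  excess_eq_zero hs hw := by
    rw [normal_of_mem_cone ((cone_chart hs).symm.subset hw)]
    norm_num
  excess_pos {s s' w} hs hs' hw hw' := by
    rw [← cone_chart hs'] at hw
    rw [← cone_chart hs] at hw'
    obtain ⟨v, hv, rfl⟩ := exists_rankOne_of_mem_cone hw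
    exact sub_pos.2 (mod_cast two_lt_normal hv hw')
  coeff := P.coeff
  coeff_ne_zero {s w} hs hw := by
    rw [← cone_chart hs] at hw
    obtain ⟨i, rfl⟩ := mem_cone.1 hw
    exact coeff_ray s i ▸ P.genericCoord_ne_zero _ _
  spans_coeff_pos := P.isSpanning_coeff_pos
  height s := P.genericValue (P.normal (P.chart s))
  height_sub {s s'} hs _ := by
    rw [← sum_coeff_mul hs, ← sum_coeff_mul hs, ← sum_sub_distrib]
    refine sum_congr rfl fun w hw ↦ ?_
    rw [normal_of_mem_cone ((cone_chart hs).symm.subset hw), mul_sub]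
    norm_num
  exists_flip hs hw _ := exists_cone_flip hs hw
  finite_of_spans := P.finite_cone_superset
  finite_height_le c := ((P.finite_genericValue_normal_le c).image P.cone).subset
    fun s hs ↦ ⟨P.chart s, hs.2, cone_chart hs.1⟩

end PerfectForm

end Forms

section RootSystemA

open Matrix

/-- The pairing `A ↦ tr ((1 + J) A)` with the perfect form of type `Aₙ`, where `J` is the all-ones
matrix. -/
def formA (n : ℕ) : IntMat n →ₗ[ℤ] ℤ :=
  traceLinearMap (Fin n) ℤ ℤ + ∑ i, ∑ j, entryLinearMap ℤ ℤ i j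

variable {n : ℕ}

theorem formA_rankOne (u : Fin n → ℤ) : formA n (rankOne u) = ∑ i, u i ^ 2 + (∑ i, u i) ^ 2 := by
  simp [formA, rankOne, trace, vecMulVec_apply, pow_two, sum_mul_sum]

theorem sq_le_formA (u : Fin n → ℤ) (i : Fin n) : u i ^ 2 ≤ formA n (rankOne u) := by
  rw [formA_rankOne]
  exact (single_le_sum (fun i _ ↦ sq_nonneg (u i)) (mem_univ i)).trans
    (le_add_of_nonneg_right (sq_nonneg _))

theorem mem_piFinset_of_formA_le_two {u : Fin n → ℤ} (h : formA n (rankOne u) ≤ 2) :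
    u ∈ Fintype.piFinset fun _ ↦ ({-1, 0, 1} : Finset ℤ) := by
  refine Fintype.mem_piFinset.2 fun i ↦ ?_
  have hi := (sq_le_formA u i).trans h
  have : -1 ≤ u i := by nlinarith
  have : u i ≤ 1 := by nlinarith
  simp only [mem_insert, mem_singleton]
  omega

/-- The positive roots of `A₂`, in coordinates dual to those of `formA 2`. -/
def rootA₂ : Fin 3 → Fin 2 → ℤ := ![![1, 0], ![0, 1], ![1, -1]]

/-- The positive roots of `A₃`, in coordinates dual to those of `formA 3`. -/
def rootA₃ : Fin 6 → Fin 3 → ℤ :=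
  ![![1, 0, 0], ![0, 1, 0], ![0, 0, 1], ![1, -1, 0], ![1, 0, -1], ![0, 1, -1]]

/-- The coordinates of binary quadratic forms in the basis given by `rootA₂`. -/
def coordA₂ : IntMat 2 →ₗ[ℤ] Fin 3 → ℤ :=
  let e (i j : Fin 2) : IntMat 2 →ₗ[ℤ] ℤ := entryLinearMap ℤ ℤ i j
  LinearMap.pi ![e 0 0 + e 0 1, e 1 0 + e 1 1, -e 0 1]

/-- The coordinates of ternary quadratic forms in the basis given by `rootA₃`. -/
def coordA₃ : IntMat 3 →ₗ[ℤ] Fin 6 → ℤ :=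
  let e (i j : Fin 3) : IntMat 3 →ₗ[ℤ] ℤ := entryLinearMap ℤ ℤ i j
  LinearMap.pi ![e 0 0 + e 0 1 + e 0 2, e 1 0 + e 1 1 + e 1 2, e 2 0 + e 2 1 + e 2 2,
    -e 0 1, -e 0 2, -e 1 2]

/-- The perfect form of type `A₂`. -/
def perfectFormA₂ : PerfectForm 2 3 where
  root := rootA₂
  coord := coordA₂
  form := formA 2
  sum_coord_smul u := by
    ext i j
    fin_cases i <;> fin_cases j <;>
      simp [-zsmul_eq_mul, Matrix.sum_apply, Fin.sum_univ_succ, coordA₂, rankOne,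
        vecMulVec_apply, rootA₂] <;> ring
  coord_root := by decide +kernel
  form_root := by decide +kernel
  exists_root {u} hu hform := by
    have key : ∀ u ∈ Fintype.piFinset fun _ : Fin 2 ↦ ({-1, 0, 1} : Finset ℤ),
        u ≠ 0 → formA 2 (rankOne u) ≤ 2 → ∃ i, rankOne u = rankOne (rootA₂ i) := by
      decide +kernel
    exact key u (mem_piFinset_of_formA_le_two hform) hu hform
  sq_le_form := sq_le_formA
  eq_zero_of_dotProduct x hx := by
    have h₀ : x 0 = 0 := by simpa [rootA₂, dotProduct, Fin.sum_univ_succ] using hx 0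
    have h₁ : x 1 = 0 := by simpa [rootA₂, dotProduct, Fin.sum_univ_succ] using hx 1
    ext i
    fin_cases i
    exacts [h₀, h₁]
  exists_flip i := by
    fin_cases i
    · exact ⟨⟨!![1, 0; -1, 1], !![1, 0; 1, 1], by decide +kernel, by decide +kernel⟩,
        by decide +kernel⟩
    · exact ⟨⟨!![1, -1; 0, 1], !![1, 1; 0, 1], by decide +kernel, by decide +kernel⟩,
        by decide +kernel⟩
    · exact ⟨⟨!![0, 1; -1, 0], !![0, -1; 1, 0], by decide +kernel, by decide +kernel⟩,
        by decide +kernel⟩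

/-- The perfect form of type `A₃`. -/
def perfectFormA₃ : PerfectForm 3 6 where
  root := rootA₃
  coord := coordA₃
  form := formA 3
  sum_coord_smul u := by
    ext i j
    fin_cases i <;> fin_cases j <;>
      simp [-zsmul_eq_mul, Matrix.sum_apply, Fin.sum_univ_succ, coordA₃, rankOne,
        vecMulVec_apply, rootA₃] <;> ring
  coord_root := by decide +kernel
  form_root := by decide +kernel
  exists_root {u} hu hform := by
    have key : ∀ u ∈ Fintype.piFinset fun _ : Fin 3 ↦ ({-1, 0, 1} : Finset ℤ),
        u ≠ 0 → formA 3 (rankOne u) ≤ 2 → ∃ i, rankOne u = rankOne (rootA₃ i) := by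
      decide +kernel
    exact key u (mem_piFinset_of_formA_le_two hform) hu hform
  sq_le_form := sq_le_formA
  eq_zero_of_dotProduct x hx := by
    have h₀ : x 0 = 0 := by simpa [rootA₃, dotProduct, Fin.sum_univ_succ] using hx 0
    have h₁ : x 1 = 0 := by simpa [rootA₃, dotProduct, Fin.sum_univ_succ] using hx 1
    have h₂ : x 2 = 0 := by simpa [rootA₃, dotProduct, Fin.sum_univ_succ] using hx 2
    ext i
    fin_cases i
    exacts [h₀, h₁, h₂]
  exists_flip i := by
    fin_cases i
    · exact ⟨⟨!![0, 0, 1; 0, -1, -1; 1, 1, 0], !![1, 1, 1; -1, -1, 0; 1, 0, 0],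
        by decide +kernel, by decide +kernel⟩, by decide +kernel⟩
    · exact ⟨⟨!![0, 1, 1; 0, 0, -1; -1, -1, 0], !![-1, -1, -1; 1, 1, 0; 0, -1, 0],
        by decide +kernel, by decide +kernel⟩, by decide +kernel⟩
    · exact ⟨⟨!![0, 1, 1; 1, 0, 1; 0, 0, -1], !![0, 1, 1; 1, 0, 1; 0, 0, -1],
        by decide +kernel, by decide +kernel⟩, by decide +kernel⟩
    · exact ⟨⟨!![0, 0, 1; 0, -1, 0; 1, 1, 0], !![0, 1, 1; 0, -1, 0; 1, 0, 0],
        by decide +kernel, by decide +kernel⟩, by decide +kernel⟩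
    · exact ⟨⟨!![0, 0, 1; 0, -1, -1; 1, 1, 1], !![0, 1, 1; -1, -1, 0; 1, 0, 0],
        by decide +kernel, by decide +kernel⟩, by decide +kernel⟩
    · exact ⟨⟨!![0, 1, 1; 0, 0, -1; -1, -1, -1], !![-1, 0, -1; 1, 1, 0; 0, -1, 0],
        by decide +kernel, by decide +kernel⟩, by decide +kernel⟩

end RootSystemA

section Cohomology

universe u

variable {k G : Type u} [CommRing k] [Group G] {i : ℕ}

theorem isZero_groupCohomology_of_retract {A B : Rep.{u} k G} (r : Retract A B)
    (hB : Limits.IsZero (groupCohomology B i)) : Limits.IsZero (groupCohomology A i) :=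
  let r' : Retract (groupCohomology A i) (groupCohomology B i) :=
    r.map (groupCohomology.functor k G i)
  Limits.IsZero.of_mono r'.i hB

variable {U V W : Type u} [AddCommGroup U] [Module k U] [AddCommGroup V] [Module k V]
  [AddCommGroup W] [Module k W] {ρ : Representation k G U} {σ : Representation k G V}
  {τ : Representation k G W}

theorem isZero_groupCohomology_succ_of_averaging (π : (G → U) →ₗ[k] U)
    (hπ : ∀ a, π (fun h ↦ ρ h a) = a) (hπ_equivariant : ∀ g F, π (fun h ↦ F (h * g)) = ρ g (π F))
    (i : ℕ) : Limits.IsZero (groupCohomology (Rep.of ρ) (i + 1)) := by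
  let A : Rep.{u} k (⊥ : Subgroup G) := Rep.of (Representation.trivial k (⊥ : Subgroup G) U)
  have hmem (F : G → U) : F ∈ Representation.coindV (⊥ : Subgroup G).subtype A.ρ := by
    intro g h
    obtain rfl : g = 1 := Subsingleton.elim _ _
    simp
  -- `ρ` is a retract of the functions `G → U`, which are coinduced from the trivial subgroup.
  let r : Retract (Rep.of ρ) (Rep.coind (⊥ : Subgroup G).subtype A) :=
    { i := Rep.ofHom
        { toFun := fun a ↦ ⟨fun h ↦ ρ h a, hmem _⟩
          map_add' := fun a b ↦ by ext; simp
          map_smul' := fun c a ↦ by ext; simp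
          isIntertwining' := fun g ↦ by
            ext a x
            exact congrArg (· a) (map_mul ρ x g).symm }
      r := Rep.ofHom
        { toFun := fun F ↦ π F.1
          map_add' := fun _ _ ↦ map_add π _ _
          map_smul' := fun _ _ ↦ map_smul π _ _
          isIntertwining' := fun g ↦ by
            ext F
            exact hπ_equivariant g F.1 }
      retract := Rep.hom_ext (by ext a; exact hπ a) }
  exact isZero_groupCohomology_of_retract r
    ((isZero_groupCohomology_succ_of_subsingleton A i).of_iso (groupCohomology.coindIso A (i + 1)))

theorem isZero_groupCohomology_trivial_of_finite [Finite G] (hG : IsUnit (Nat.card G : k))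
    (i : ℕ) : Limits.IsZero (groupCohomology (Rep.trivial k G k) (i + 1)) := by
  have := Fintype.ofFinite G
  obtain ⟨c, hc⟩ := hG.exists_left_inv
  refine isZero_groupCohomology_succ_of_averaging (ρ := Representation.trivial k G k)
    (c • ∑ g : G, LinearMap.proj g) (fun a ↦ ?_) (fun g F ↦ ?_) i
  · rw [Nat.card_eq_fintype_card] at hc
    simp [← mul_assoc, hc]
  · simpa using congrArg (c * ·) (Fintype.sum_equiv (Equiv.mulRight g) _ _ fun _ ↦ rfl)

theorem isZero_groupCohomology_succ_of_exact {f : U →ₗ[k] V} {g : V →ₗ[k] W}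
    (hf : ∀ x u, f (ρ x u) = σ x (f u)) (hg : ∀ x v, g (σ x v) = τ x (g v))
    (hinj : Function.Injective f) (hsurj : Function.Surjective g) (hexact : Function.Exact f g)
    (hτ : Limits.IsZero (groupCohomology (Rep.of τ) i))
    (hσ : Limits.IsZero (groupCohomology (Rep.of σ) (i + 1))) :
    Limits.IsZero (groupCohomology (Rep.of ρ) (i + 1)) := by
  let S : ShortComplex (Rep k G) :=
    { f := Rep.ofHom (f.intertwiningMap_of_isIntertwiningMap ρ σ hf)
      g := Rep.ofHom (g.intertwiningMap_of_isIntertwiningMap σ τ hg)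
      zero := Rep.hom_ext (by ext a; exact hexact.apply_apply_eq_zero a) }
  have hS : S.ShortExact :=
    { exact := by
        rw [← ShortComplex.exact_map_iff_of_faithful S (forget₂ (Rep k G) (ModuleCat k)),
          ShortComplex.moduleCat_exact_iff]
        exact fun v hv ↦ (hexact v).1 hv
      mono_f := (Rep.mono_iff_injective _).2 hinj
      epi_g := (Rep.epi_iff_surjective _).2 hsurj }
  have := groupCohomology.epi_δ_of_isZero hS i hσ
  exact Limits.IsZero.of_epi (groupCohomology.δ hS i (i + 1) rfl) hτ

theorem isZero_groupCohomology_zero (h : ∀ u, (∀ g, ρ g u = u) → u = 0) :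
    Limits.IsZero (groupCohomology (Rep.of ρ) 0) := by
  have : Subsingleton (Rep.of ρ).ρ.invariants :=
    subsingleton_of_forall_eq 0 fun u ↦ Subtype.ext (h u.1 u.2)
  exact (ModuleCat.isZero_of_subsingleton _).of_iso (groupCohomology.H0Iso (Rep.of ρ))

theorem isZero_groupCohomology_trivial_of_line {o : U}
    (hfree : Function.Injective fun c : k ↦ c • o)
    (hspan : ∀ u, ∃ c : k, c • o = u) (hinv : ∀ g, ρ g o = o)
    (h : Limits.IsZero (groupCohomology (Rep.of ρ) i)) :
    Limits.IsZero (groupCohomology (Rep.trivial k G k) i) := by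
  let e : Representation.Equiv (Representation.trivial k G k) ρ :=
    .mk (LinearEquiv.ofBijective (LinearMap.toSpanSingleton k U o) ⟨hfree, hspan⟩)
      (fun g ↦ by
        ext
        change (1 : k) • o = ρ g ((1 : k) • o)
        rw [map_smul, hinv])
  exact h.of_iso ((groupCohomology.functor k G i).mapIso (Rep.mkIso e))

end Cohomology

open scoped Pointwise

section Transporters

variable {G Y : Type*} [Group G] [MulAction G Y]

open Classical in
variable (G) in
/-- The group elements carrying the chosen representative of the orbit of `y` to `y`; `∅` if `y`
has infinite stabilizer. -/
noncomputable def transporters (y : Y) : Finset G :=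
  if h : {g : G | g • (Quotient.mk (MulAction.orbitRel G Y) y).out = y}.Finite then h.toFinset
  else ∅

variable (y : Y)

variable (G) in
theorem exists_smul_out_eq : ∃ g : G, g • (Quotient.mk (MulAction.orbitRel G Y) y).out = y :=
  MulAction.mem_orbit_iff.1 (MulAction.orbitRel_apply.1
    ((MulAction.orbitRel G Y).symm (Quotient.mk_out (s := MulAction.orbitRel G Y) y)))

theorem mk_smul_eq_mk (x : G) :
    Quotient.mk (MulAction.orbitRel G Y) (x • y) = Quotient.mk (MulAction.orbitRel G Y) y :=
  Quotient.sound (s := MulAction.orbitRel G Y) ⟨x, rfl⟩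

variable [Finite (MulAction.stabilizer G y)]

variable {y} in
theorem mem_transporters {g : G} :
    g ∈ transporters G y ↔ g • (Quotient.mk (MulAction.orbitRel G Y) y).out = y := by
  suffices h : {g : G | g • (Quotient.mk (MulAction.orbitRel G Y) y).out = y}.Finite by
    simp [transporters, h]
  obtain ⟨g₀, hg₀⟩ := exists_smul_out_eq G y
  refine ((Set.toFinite (MulAction.stabilizer G y : Set G)).image (· * g₀)).subset fun g hg ↦
    ⟨g * g₀⁻¹, ?_, by simp⟩
  rw [SetLike.mem_coe, MulAction.mem_stabilizer_iff]
  nth_rw 1 [← hg₀]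
  rw [smul_smul, inv_mul_cancel_right, hg]

variable (G) in
theorem transporters_nonempty : (transporters G y).Nonempty :=
  (exists_smul_out_eq G y).imp fun _ ↦ mem_transporters.2

instance finite_stabilizer_smul (x : G) : Finite (MulAction.stabilizer G (x • y)) :=
  Finite.of_equiv _ (MulAction.stabilizerEquivStabilizer (a := y) (g := x) rfl).toEquiv

theorem transporters_smul [DecidableEq G] (x : G) :
    transporters G (x • y) = x • transporters G y := by
  ext g
  rw [← Finset.inv_smul_mem_iff, mem_transporters, mem_transporters, mk_smul_eq_mk, smul_eq_mul,
    mul_smul, inv_smul_eq_iff]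

end Transporters

theorem toFinset_map_smul {G X : Type*} [DecidableEq X] [SMul G X] (g : G) (l : List X) :
    (l.map (g • ·)).toFinset = g • l.toFinset := by
  ext
  simp [Finset.mem_smul_finset]

section TwistedAction

universe u

variable {G X k : Type u} [Group G] [MulAction G X]

variable (X k) in
/-- The permutation representation of `G` on functions of lists, twisted by a sign character. -/
def twistedRep [CommRing k] (ε : G →* ℤˣ) : Representation k G (List X → k) where
  toFun g :=
    { toFun := fun φ l ↦ ε g • φ (l.map (g⁻¹ • ·))
      map_add' := fun φ ψ ↦ by ext; simp
      map_smul' := fun c φ ↦ by ext; simp [mul_smul_comm] }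
  map_one' := by ext; simp
  map_mul' g h := by ext; simp [mul_smul, Function.comp_def]

theorem twistedRep_apply [CommRing k] (ε : G →* ℤˣ) (g : G) (φ : List X → k) (l : List X) :
    twistedRep X k ε g φ l = ε g • φ (l.map (g⁻¹ • ·)) :=
  rfl

variable [DecidableEq X]

/-- The map `f`, twisted by the sign `s`, reverses the orientation of the simplex `S`: it acts on
`S` as a transposition with `s = 1`, or trivially with `s = -1`. -/
def ReversesOrientation (s : ℤˣ) (f : X → X) (S : Finset X) : Prop :=
  (s = 1 ∧ ∃ a ∈ S, ∃ b ∈ S, a ≠ b ∧ ∀ x ∈ S, f x = Equiv.swap a b x) ∨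
    (s = -1 ∧ ∀ x ∈ S, f x = x)

theorem IsAlternating.apply_map_of_reversesOrientation [CommRing k] {s : ℤˣ} {f : X → X}
    {φ : List X → k} {l : List X} (hφ : IsAlternating φ) (hl : l.Nodup)
    (hf : ReversesOrientation s f l.toFinset) : φ (l.map f) = -(s • φ l) := by
  rcases hf with ⟨rfl, a, ha, b, hb, hab, hswap⟩ | ⟨rfl, hfix⟩
  · rw [List.map_congr_left fun x hx ↦ hswap x (List.mem_toFinset.2 hx),
      hφ.map_swap hl hab (List.mem_toFinset.1 ha) (List.mem_toFinset.1 hb), one_smul]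
  · rw [List.map_congr_left (g := id) fun x hx ↦ hfix x (List.mem_toFinset.2 hx), List.map_id]
    simp

namespace ShelledComplex

variable (C : ShelledComplex X)

variable (G) in
/-- `G` acts on `X` by automorphisms of `C`, with finite stabilizers of cells. -/
structure IsProper : Prop where
  isCell_smul : ∀ (g : G) {S}, C.IsCell S → C.IsCell (g • S)
  finite_stabilizer : ∀ {S}, C.IsCell S → Finite (MulAction.stabilizer G S)

variable (k) in
/-- The cycles among the locally finite chains. -/
noncomputable def cycles [CommRing k] (j : ℕ) : Submodule k (List X → k) :=
  C.chains k j ⊓ LinearMap.ker C.boundary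

variable {C} {j : ℕ} (ε : G →* ℤˣ) {φ : List X → k}

namespace IsProper

variable (hC : C.IsProper G)

include hC in
theorem isCell_smul_iff (g : G) {S : Finset X} : C.IsCell (g • S) ↔ C.IsCell S :=
  ⟨fun h ↦ inv_smul_smul g S ▸ hC.isCell_smul g⁻¹ h, hC.isCell_smul g⟩

section CommRing

variable [CommRing k]

include hC

theorem twistedRep_mem_chains (g : G) (hφ : φ ∈ C.chains k j) :
    twistedRep X k ε g φ ∈ C.chains k j := by
  refine ⟨fun p a b q ↦ ?_, fun l hl ↦ ?_⟩
  · rw [twistedRep_apply, twistedRep_apply, ← smul_neg]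
    exact congrArg _ (hφ.1.comp_map (g⁻¹ • ·) p a b q)
  · obtain ⟨hnodup, hcell, hlen⟩ := hφ.2 (l.map (g⁻¹ • ·)) fun h ↦ hl (by
      rw [twistedRep_apply, h, smul_zero])
    rw [toFinset_map_smul, hC.isCell_smul_iff] at hcell
    exact ⟨hnodup.of_map _, hcell, by simpa using hlen⟩

theorem coface_smul (g : G) {S : Finset X} (hS : C.IsCell S) :
    C.coface (g • S) = g • C.coface S := by
  ext w
  rw [← Finset.inv_smul_mem_iff, C.mem_coface (hC.isCell_smul g hS), C.mem_coface hS,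
    Finset.inv_smul_mem_iff, ← hC.isCell_smul_iff g (S := insert (g⁻¹ • w) S),
    Finset.smul_finset_insert, smul_inv_smul]

theorem boundary_twistedRep (g : G) (φ : List X → k) :
    C.boundary (twistedRep X k ε g φ) = twistedRep X k ε g (C.boundary φ) := by
  ext l
  rw [twistedRep_apply]
  by_cases hc : C.IsCell l.toFinset
  · have hc' := hC.isCell_smul g⁻¹ hc
    rw [boundary_apply _ hc, boundary_apply _ (by rwa [toFinset_map_smul]), toFinset_map_smul,
      hC.coface_smul g⁻¹ hc, ← Finset.image_smul,
      Finset.sum_image (MulAction.injective g⁻¹).injOn, Finset.smul_sum]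
    rfl
  · rw [boundary_apply_of_not_isCell _ hc, boundary_apply_of_not_isCell, smul_zero]
    rwa [toFinset_map_smul, hC.isCell_smul_iff]

theorem twistedRep_mem_cycles (g : G) (hφ : φ ∈ C.cycles k j) :
    twistedRep X k ε g φ ∈ C.cycles k j := by
  refine ⟨hC.twistedRep_mem_chains ε g hφ.1, ?_⟩
  rw [SetLike.mem_coe, LinearMap.mem_ker, hC.boundary_twistedRep, LinearMap.mem_ker.1 hφ.2,
    map_zero]

variable (k j)

/-- The twisted action of `G` on the chains of a complex. -/
noncomputable abbrev chainsRep : Representation k G (C.chains k j) :=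
  (twistedRep X k ε).subrepresentation (C.chains k j) fun g _ ↦ hC.twistedRep_mem_chains ε g

/-- The twisted action of `G` on the cycles of a complex. -/
noncomputable abbrev cyclesRep : Representation k G (C.cycles k j) :=
  (twistedRep X k ε).subrepresentation (C.cycles k j) fun g _ ↦ hC.twistedRep_mem_cycles ε g

end CommRing

end IsProper

section Average

variable [Field k]

/-- The average of a family of functions on lists over the transporters of the simplex at which
they are evaluated. -/
noncomputable def average : (G → List X → k) →ₗ[k] (List X → k) where
  toFun F l := ((transporters G l.toFinset).card : k)⁻¹ *
    ∑ g ∈ transporters G l.toFinset, twistedRep X k ε g (F g⁻¹) l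
  map_add' F F' := by
    ext l
    simp [Finset.sum_add_distrib, mul_add]
  map_smul' c F := by
    ext l
    simp [← Finset.mul_sum, mul_left_comm]

theorem average_apply (F : G → List X → k) (l : List X) :
    average ε F l = ((transporters G l.toFinset).card : k)⁻¹ *
      ∑ g ∈ transporters G l.toFinset, twistedRep X k ε g (F g⁻¹) l :=
  rfl

namespace IsProper

variable (hC : C.IsProper G) {F : G → List X → k}

include hC

theorem average_mem_chains (hF : ∀ g, F g ∈ C.chains k j) : average ε F ∈ C.chains k j := by
  have hF' (g : G) : twistedRep X k ε g (F g⁻¹) ∈ C.chains k j :=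
    hC.twistedRep_mem_chains ε g (hF _)
  refine ⟨fun p a b q ↦ ?_, fun l hl ↦ ?_⟩
  · have hfinset : (p ++ a :: b :: q).toFinset = (p ++ b :: a :: q).toFinset := by
      ext
      simp [or_left_comm]
    rw [average_apply, average_apply, hfinset, ← mul_neg, ← Finset.sum_neg_distrib]
    congr! 2 with g
    exact (hF' g).1 p a b q
  · obtain ⟨g, -, h⟩ := Finset.exists_ne_zero_of_sum_ne_zero (right_ne_zero_of_mul hl)
    exact (hF' g).2 l h

theorem average_orbit [CharZero k] (hφ : φ ∈ C.chains k j) :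
    average ε (fun g ↦ twistedRep X k ε g φ) = φ := by
  ext l
  simp only [average_apply, Representation.self_inv_apply, Finset.sum_const, nsmul_eq_mul]
  by_cases hc : C.IsCell l.toFinset
  · have := hC.finite_stabilizer hc
    exact inv_mul_cancel_left₀
      (Nat.cast_ne_zero.2 (Finset.card_ne_zero.2 (transporters_nonempty G _))) _
  · rw [show φ l = 0 from by_contra fun h ↦ hc (hφ.2 l h).2.1, mul_zero, mul_zero]

theorem average_comp_mul_right (hF : ∀ g, F g ∈ C.chains k j) (x : G) :
    average ε (fun g ↦ F (g * x)) = twistedRep X k ε x (average ε F) := by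
  classical
  ext l
  by_cases hc : C.IsCell l.toFinset
  · have hc' := hC.isCell_smul x⁻¹ hc
    have := hC.finite_stabilizer hc'
    have htransporters : transporters G l.toFinset = x • transporters G (x⁻¹ • l.toFinset) := by
      rw [← transporters_smul, smul_inv_smul]
    rw [twistedRep_apply, average_apply, average_apply, toFinset_map_smul, htransporters,
      Finset.card_smul_finset, ← Finset.image_smul (s := transporters G _),
      Finset.sum_image (MulAction.injective x).injOn, ← mul_smul_comm, Finset.smul_sum]
    congr! 2 with g
    rw [← twistedRep_apply, ← Module.End.mul_apply, ← map_mul, smul_eq_mul]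
    simp
  · have hzero {ψ : List X → k} (hψ : ψ ∈ C.chains k j) : ψ l = 0 :=
      by_contra fun h ↦ hc (hψ.2 l h).2.1
    rw [hzero (hC.average_mem_chains ε fun g ↦ hF _),
      hzero (hC.twistedRep_mem_chains ε x (hC.average_mem_chains ε hF))]

variable (j) in
theorem isZero_groupCohomology_chainsRep [CharZero k] (i : ℕ) :
    Limits.IsZero (groupCohomology (Rep.of (hC.chainsRep k j ε)) (i + 1)) := by
  let π : (G → C.chains k j) →ₗ[k] C.chains k j :=
    ((average ε).comp ((C.chains k j).subtype.compLeft G)).codRestrict (C.chains k j) fun F ↦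
      hC.average_mem_chains ε fun g ↦ (F g).2
  have hπ (φ : C.chains k j) : π (fun g ↦ hC.chainsRep k j ε g φ) = φ :=
    Subtype.ext (hC.average_orbit ε φ.2)
  have hπ_equivariant (x : G) (F : G → C.chains k j) :
      π (fun g ↦ F (g * x)) = hC.chainsRep k j ε x (π F) :=
    Subtype.ext (hC.average_comp_mul_right ε (fun g ↦ (F g).2) x)
  exact isZero_groupCohomology_succ_of_averaging π hπ hπ_equivariant i

end IsProper

end Average

namespace IsProper

variable [Field k] [CharZero k] {ε} (hC : C.IsProper G)

variable (k) in
theorem isZero_groupCohomology_zero_cyclesRep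
    (hrev : ∀ S, C.IsCell S → S.card = j → ∃ g : G, ReversesOrientation (ε g) (g • ·) S) :
    Limits.IsZero (groupCohomology (Rep.of (hC.cyclesRep k j ε)) 0) := by
  refine isZero_groupCohomology_zero fun z hz ↦ Subtype.ext (funext fun l ↦ by_contra fun hl ↦ ?_)
  obtain ⟨hnodup, hcell, hlen⟩ := z.2.1.2 l hl
  obtain ⟨g, hg⟩ := hrev _ hcell (by rw [List.toFinset_card_of_nodup hnodup, hlen])
  have hinv : ε g • z.1 l = z.1 (l.map (g • ·)) := by
    conv_rhs => rw [← show twistedRep X k ε g z.1 = z.1 from congrArg Subtype.val (hz g),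
      twistedRep_apply]
    simp [Function.comp_def]
  rw [z.2.1.1.apply_map_of_reversesOrientation hnodup hg, self_eq_neg] at hinv
  exact hl ((smul_eq_zero_iff_eq _).1 hinv)

variable (k ε) in
theorem isZero_groupCohomology_succ_cyclesRep (hj : j < C.base.card) {i : ℕ}
    (h : Limits.IsZero (groupCohomology (Rep.of (hC.cyclesRep k j ε)) i)) :
    Limits.IsZero (groupCohomology (Rep.of (hC.cyclesRep k (j + 1) ε)) (i + 1)) := by
  let f : C.cycles k (j + 1) →ₗ[k] C.chains k (j + 1) := Submodule.inclusion inf_le_left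
  let g : C.chains k (j + 1) →ₗ[k] C.cycles k j :=
    (C.boundary.comp (C.chains k (j + 1)).subtype).codRestrict (C.cycles k j) fun φ ↦
      ⟨boundary_mem_chains φ.2, boundary_boundary φ.2.1⟩
  have hsurj : Function.Surjective g := by
    rintro ⟨z, hz, hd⟩
    obtain ⟨ψ, hψ, h⟩ := exists_boundary_eq_of_lt hj hz hd
    exact ⟨⟨ψ, hψ⟩, Subtype.ext h⟩
  have hexact : Function.Exact f g := by
    rintro ⟨φ, hφ⟩
    constructor
    · exact fun h ↦ ⟨⟨φ, hφ, congrArg Subtype.val h⟩, rfl⟩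
    · rintro ⟨⟨z, hz⟩, h⟩
      obtain rfl : z = φ := congrArg Subtype.val h
      exact Subtype.ext hz.2
  exact isZero_groupCohomology_succ_of_exact (σ := hC.chainsRep k (j + 1) ε)
    (τ := hC.cyclesRep k j ε) (f := f) (g := g) (fun _ _ ↦ rfl)
    (fun x φ ↦ Subtype.ext (hC.boundary_twistedRep ε x φ.1)) (Submodule.inclusion_injective _)
    hsurj hexact h (hC.isZero_groupCohomology_chainsRep (j + 1) ε i)

variable (k) in
theorem isZero_groupCohomology_cyclesRep (hempty : ¬C.IsCell ∅)
    (hrev : ∀ S, C.IsCell S → S.card < C.base.card → ∃ g : G, ReversesOrientation (ε g) (g • ·) S)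
    (hj : j < C.base.card) (i : ℕ) :
    Limits.IsZero (groupCohomology (Rep.of (hC.cyclesRep k j ε)) i) := by
  induction i generalizing j with
  | zero =>
    exact hC.isZero_groupCohomology_zero_cyclesRep k fun S hS hcard ↦ hrev S hS (hcard ▸ hj)
  | succ i ih =>
    cases j with
    | succ j => exact hC.isZero_groupCohomology_succ_cyclesRep k ε (by omega) (ih (by omega))
    | zero =>
      have : Subsingleton (C.cycles k 0) := by
        refine subsingleton_of_forall_eq 0 fun z ↦ Subtype.ext (funext fun l ↦ ?_)
        by_contra hl
        obtain ⟨-, hcell, hlen⟩ := z.2.1.2 l hl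
        obtain rfl := List.length_eq_zero_iff.1 hlen
        exact hempty hcell
      exact isZero_groupCohomology_succ_of_averaging 0 (fun _ ↦ Subsingleton.elim _ _)
        (fun _ _ ↦ Subsingleton.elim _ _) i

include hC in
theorem isZero_groupCohomology_trivial {o : List X → k} {l : List X}
    (hcard : ∀ S, C.IsCell S → S.card ≤ C.base.card) (hempty : ¬C.IsCell ∅)
    (hrev : ∀ S, C.IsCell S → S.card < C.base.card → ∃ g : G, ReversesOrientation (ε g) (g • ·) S)
    (ho : o ∈ C.cycles k C.base.card) (hinv : ∀ g, twistedRep X k ε g o = o)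
    (hl : l.toFinset = C.base) (hol : o l ≠ 0) (i : ℕ) :
    Limits.IsZero (groupCohomology (Rep.trivial k G k) (i + 1)) := by
  obtain ⟨hnodup, hbase, -⟩ := ho.1.2 l hol
  rw [hl] at hbase
  have hcycles : Limits.IsZero
      (groupCohomology (Rep.of (hC.cyclesRep k C.base.card ε)) (i + 1)) := by
    obtain ⟨j, hj⟩ := Nat.exists_eq_succ_of_ne_zero
      (Finset.card_ne_zero.2 (Finset.nonempty_iff_ne_empty.2 fun h ↦ hempty (h ▸ hbase)))
    rw [hj]
    exact hC.isZero_groupCohomology_succ_cyclesRep k ε (by omega)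
      (hC.isZero_groupCohomology_cyclesRep k hempty hrev (by omega) i)
  refine isZero_groupCohomology_trivial_of_line (o := ⟨o, ho⟩) (fun a b hab ↦ ?_)
    (fun z ↦ ⟨z.1 l / o l, ?_⟩) (fun g ↦ Subtype.ext (hinv g)) hcycles
  · exact mul_right_cancel₀ hol (congrFun (congrArg Subtype.val hab) l)
  · refine sub_eq_zero.1 (Subtype.ext (eq_zero_of_apply_eq_zero hcard
      ((z.1 l / o l) • (⟨o, ho⟩ : C.cycles k C.base.card) - z).2.1
      ((z.1 l / o l) • (⟨o, ho⟩ : C.cycles k C.base.card) - z).2.2 hl hnodup ?_))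
    simp [hol]

end IsProper

end ShelledComplex

end TwistedAction

section Facets

open Matrix

variable {n k : ℕ}

theorem evalForm_congruence (g : (IntMat n)ˣ) (x : Fin n → ℤ) (A : IntMat n) :
    evalForm x (congruence n g A) = evalForm (g.valᵀ *ᵥ x) A := by
  change x ⬝ᵥ (g.val * (A * g.valᵀ)) *ᵥ x = (g.valᵀ *ᵥ x) ⬝ᵥ A *ᵥ g.valᵀ *ᵥ x
  rw [← mulVec_mulVec, ← mulVec_mulVec, dotProduct_mulVec, mulVec_transpose]

theorem IsSpanning.image_congruence {S : Finset (IntMat n)} (hS : IsSpanning S) (g : (IntMat n)ˣ) :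
    IsSpanning (S.image (congruence n g)) := fun x hx ↦ by
  have h₀ : g.valᵀ *ᵥ x = 0 := hS _ fun A hA ↦ by
    rw [← evalForm_congruence, hx _ (mem_image_of_mem _ hA)]
  calc x = (g.val * g⁻¹.val)ᵀ *ᵥ x := by rw [Units.mul_inv, transpose_one, one_mulVec]
    _ = 0 := by rw [transpose_mul, ← mulVec_mulVec, h₀, mulVec_zero]

namespace PerfectForm

variable {P : PerfectForm n k} {g g' : (IntMat n)ˣ} {S : Finset (IntMat n)} {w w' : IntMat n}

theorem isCell_fan_iff : P.fan.IsCell S ↔ IsSpanning S ∧ ∃ g, S ⊆ P.cone g :=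
  and_congr_right fun _ ↦ Set.exists_range_iff

theorem isCell_fan_image_congruence (hS : P.fan.IsCell S) (g : (IntMat n)ˣ) :
    P.fan.IsCell (S.image (congruence n g)) := by
  rw [isCell_fan_iff] at hS ⊢
  obtain ⟨hspan, h, hsub⟩ := hS
  exact ⟨hspan.image_congruence g, g * h, cone_mul g h ▸ image_subset_image hsub⟩

theorem exists_rankOne_of_isCell_fan (hS : P.fan.IsCell S) (hw : w ∈ S) : ∃ u, w = rankOne u := by
  obtain ⟨-, g, hsub⟩ := isCell_fan_iff.1 hS
  exact (exists_rankOne_of_mem_cone (hsub hw)).imp fun _ h ↦ h.2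

theorem finite_stabilizer_of_isCell_fan (hS : P.fan.IsCell S) :
    {g | S.image (congruence n g) = S}.Finite := by
  obtain ⟨hspan, h, hsub⟩ := isCell_fan_iff.1 hS
  refine ((P.finite_normal_le hspan (fun _ ↦ exists_rankOne_of_isCell_fan hS) 2).preimage
    (mul_left_injective h).injOn).subset fun g (hg : _ = S) A hA ↦ (normal_of_mem_cone ?_).le
  rw [← hg] at hA
  rw [cone_mul]
  exact image_subset_image hsub hA

theorem rankOne_mem_span_cone (g : (IntMat n)ˣ) (v : Fin n → ℤ) :
    rankOne v ∈ Submodule.span ℤ (P.cone g : Set (IntMat n)) := by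
  rw [← (congruence n).self_inv_apply g (rankOne v), congruence_rankOne, ← P.sum_coord_smul,
    map_sum]
  exact Submodule.sum_mem _ fun i _ ↦ by
    rw [map_smul]
    exact Submodule.smul_mem _ _ (Submodule.subset_span (congruence_ray_mem_cone g i))

theorem exists_sub_zsmul_mem_span (hw : insert w S = P.cone g) (hw' : insert w' S = P.cone g') :
    ∃ c : ℤ, w' - c • w ∈ Submodule.span ℤ (S : Set (IntMat n)) := by
  obtain ⟨v, -, rfl⟩ := exists_rankOne_of_mem_cone (hw' ▸ mem_insert_self w' S)
  have hv := P.rankOne_mem_span_cone g v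
  rw [← hw, coe_insert, Submodule.mem_span_insert] at hv
  obtain ⟨c, A, hA, hv⟩ := hv
  exact ⟨c, by rwa [hv, add_sub_cancel_left]⟩

theorem exists_separating_form (hw : insert w S = P.cone g) (hw' : insert w' S = P.cone g')
    (hwS : w ∉ S) (hwS' : w' ∉ S) (hne : w ≠ w') :
    ∃ f : IntMat n →ₗ[ℤ] ℤ, Submodule.span ℤ (S : Set (IntMat n)) ≤ LinearMap.ker f ∧
      0 < f w ∧ f w' < 0 := by
  have hlt {h h' : (IntMat n)ˣ} {x x' : IntMat n} (hx : insert x S = P.cone h)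
      (hx' : insert x' S = P.cone h') (hxS : x ∉ S) (hne : x ≠ x') :
      P.normal h x < P.normal h' x := by
    have hmem : x ∈ P.cone h := hx ▸ mem_insert_self x S
    obtain ⟨v, hv, rfl⟩ := exists_rankOne_of_mem_cone hmem
    rw [normal_of_mem_cone hmem]
    exact two_lt_normal hv (hx' ▸ fun h ↦ (mem_insert.1 h).elim hne hxS)
  refine ⟨P.normal g' - P.normal g, Submodule.span_le.2 fun A hA ↦ ?_,
    sub_pos.2 (hlt hw hw' hwS hne), sub_neg.2 (hlt hw' hw hwS' hne.symm)⟩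
  rw [SetLike.mem_coe, LinearMap.mem_ker, LinearMap.sub_apply,
    normal_of_mem_cone (hw' ▸ mem_insert_of_mem hA), normal_of_mem_cone (hw ▸ mem_insert_of_mem hA),
    sub_self]

/-- Two simplicial cones on either side of a common facet, each unimodular, hence with opposite
extra rays modulo the facet. -/
theorem add_mem_span (hw : insert w S = P.cone g) (hw' : insert w' S = P.cone g')
    (hwS : w ∉ S) (hwS' : w' ∉ S) (hne : w ≠ w') :
    w + w' ∈ Submodule.span ℤ (S : Set (IntMat n)) := by
  obtain ⟨f, hker, hfw, hfw'⟩ := exists_separating_form hw hw' hwS hwS' hne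
  obtain ⟨c, hc⟩ := exists_sub_zsmul_mem_span hw hw'
  obtain ⟨d, hd⟩ := exists_sub_zsmul_mem_span hw' hw
  have hfc : f w' = c * f w := by
    simpa [sub_eq_zero, -zsmul_eq_mul] using hker hc
  have hfd : f w = d * f w' := by
    simpa [sub_eq_zero, -zsmul_eq_mul] using hker hd
  have hcd : c * d = 1 := mul_right_cancel₀ hfw'.ne (by rw [mul_assoc, ← hfd, ← hfc, one_mul])
  rcases Int.eq_one_or_neg_one_of_mul_eq_one hcd with rfl | rfl
  · linarith
  · simpa [add_comm] using hc

theorem mem_coface_fan (hS : P.fan.IsCell S) (hwS : w ∉ S) (hw : insert w S = P.cone g) :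
    w ∈ P.fan.coface S :=
  (VoronoiFan.mem_coface hS).2 ⟨hwS, isCell_fan_iff.2
    ⟨(isCell_fan_iff.1 hS).1.mono (subset_insert w S), g, hw.subset⟩⟩

variable (hS : P.fan.IsCell S) (hcard : S.card + 1 = k)

include hS hcard

theorem exists_insert_eq_cone (hw : w ∈ P.fan.coface S) : w ∉ S ∧ ∃ g, insert w S = P.cone g := by
  obtain ⟨hwS, hcell⟩ := (VoronoiFan.mem_coface hS).1 hw
  obtain ⟨-, g, hsub⟩ := isCell_fan_iff.1 hcell
  exact ⟨hwS, g, eq_of_subset_of_card_le hsub (by rw [card_cone, card_insert_of_notMem hwS, hcard])⟩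

theorem exists_pair_mem_coface_fan : ∃ w ∈ P.fan.coface S, ∃ w' ∈ P.fan.coface S, w ≠ w' := by
  have hcoface {s : Finset (IntMat n)} (hs : s ∈ Set.range P.cone) (hsub : S ⊆ s) :
      ∃ w ∈ P.fan.coface S, insert w S = s := by
    obtain ⟨g, rfl⟩ := hs
    obtain ⟨w, hwS, hw⟩ := (covBy_iff_exists_insert (s := S) (t := P.cone g)).1
      (Finset.covBy_iff_card_sdiff_eq_one.2 ⟨hsub, by
        rw [card_sdiff_of_subset hsub, card_cone]; omega⟩)
    exact ⟨w, mem_coface_fan hS hwS hw, hw⟩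
  obtain ⟨-, g, hsub⟩ := isCell_fan_iff.1 hS
  obtain ⟨w, hwS, hw⟩ := hcoface ⟨g, rfl⟩ hsub
  have hwS' := (exists_insert_eq_cone hS hcard hwS).1
  obtain ⟨s, hs, hsub', hws⟩ := exists_cone_flip ⟨g, rfl⟩ (hw ▸ mem_insert_self w S)
  rw [← hw, erase_insert hwS'] at hsub'
  obtain ⟨w', hwS', rfl⟩ := hcoface hs hsub'
  exact ⟨w, hwS, w', hwS', fun h ↦ hws (h ▸ mem_insert_self w' S)⟩

theorem sum_coface_mem_span :
    ∑ w ∈ P.fan.coface S, w ∈ Submodule.span ℤ (S : Set (IntMat n)) := by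
  have hadd {x y : IntMat n} (hx : x ∈ P.fan.coface S) (hy : y ∈ P.fan.coface S) (hne : x ≠ y) :
      x + y ∈ Submodule.span ℤ (S : Set (IntMat n)) := by
    obtain ⟨hxS, g, hx⟩ := exists_insert_eq_cone hS hcard hx
    obtain ⟨hyS, h, hy⟩ := exists_insert_eq_cone hS hcard hy
    exact add_mem_span hx hy hxS hyS hne
  obtain ⟨w, hw, w', hw', hne⟩ := exists_pair_mem_coface_fan hS hcard
  suffices h : P.fan.coface S = {w, w'} by
    rw [h, sum_pair hne]
    exact hadd hw hw' hne
  refine Subset.antisymm (fun x hx ↦ ?_) (insert_subset hw (singleton_subset_iff.2 hw'))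
  by_contra! hx'
  simp only [mem_insert, mem_singleton, not_or] at hx'
  -- Otherwise `2 w = (w + w') + (w + x) - (w' + x)` lies in the span of the facet.
  have htwo := Submodule.sub_mem _
    (Submodule.add_mem _ (hadd hw hw' hne) (hadd hw hx (Ne.symm hx'.1)))
    (hadd hw' hx (Ne.symm hx'.2))
  obtain ⟨hwS, g, hw⟩ := exists_insert_eq_cone hS hcard hw
  obtain ⟨hwS', g', hw'⟩ := exists_insert_eq_cone hS hcard hw'
  obtain ⟨f, hker, hfw, -⟩ := exists_separating_form hw hw' hwS hwS' hne
  have := hker htwo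
  simp only [LinearMap.mem_ker, map_sub, map_add] at this
  linarith

end PerfectForm

end Facets

section Orientation

open Matrix

theorem sum_alternatingMap_vecCons_eq_zero {R M N : Type*} [CommRing R] [IsDomain R]
    [AddCommGroup M] [Module R M] [AddCommGroup N] [Module R N] [Module.IsTorsionFree R N] {m : ℕ}
    (f : M [⋀^Fin (m + 1)]→ₗ[R] N) {s : Finset M} {v : Fin m → M}
    (hs : ∑ w ∈ s, w ∈ Submodule.span R (Set.range v)) : ∑ w ∈ s, f (vecCons w v) = 0 := by
  have hsum : ∑ w ∈ s, f (vecCons w v) = f (vecCons (∑ w ∈ s, w) v) := by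
    have hupdate (w : M) : vecCons w v = Function.update (vecCons 0 v) 0 w :=
      (Fin.update_cons_zero ..).symm
    rw [sum_congr rfl fun w _ ↦ congrArg f (hupdate w), ← f.map_update_sum, ← hupdate]
  rw [hsum]
  refine f.map_linearDependent _ fun h ↦ h.notMem_span_image (s := Set.range Fin.succ) (x := 0)
    (by simp) ?_
  rwa [← Set.range_comp]

namespace PerfectForm

variable {n k : ℕ} (P : PerfectForm n k)

/-- The matrix, in the basis of rays, of the congruence action on symmetric matrices. -/
def rayMatrix (g : (IntMat n)ˣ) : Matrix (Fin k) (Fin k) ℤ :=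
  of fun i ↦ P.coord (congruence n g (P.ray i))

theorem coord_congruence_rankOne (g : (IntMat n)ˣ) (u : Fin n → ℤ) :
    P.coord (congruence n g (rankOne u)) = P.coord (rankOne u) ᵥ* P.rayMatrix g := by
  conv_lhs => rw [← P.sum_coord_smul u]
  simp only [map_sum, map_smul, vecMul_eq_sum]
  rfl

theorem rayMatrix_mul (g h : (IntMat n)ˣ) :
    P.rayMatrix (g * h) = P.rayMatrix h * P.rayMatrix g := by
  refine funext fun i ↦ ?_
  rw [mul_apply_eq_vecMul]
  change P.coord _ = P.coord (congruence n h (rankOne _)) ᵥ* _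
  rw [map_mul, Module.End.mul_apply, ray, congruence_rankOne, coord_congruence_rankOne]

theorem rayMatrix_one : P.rayMatrix 1 = 1 := by
  ext i j
  rw [one_eq_pi_single, ← P.coord_ray i, rayMatrix, of_apply, map_one, Module.End.one_apply]

/-- The sign of the determinant of the congruence action on symmetric matrices: whether an
invertible matrix preserves the orientation of the space of quadratic forms. -/
def orientationChar : (IntMat n)ˣ →* ℤˣ :=
  MonoidHom.toHomUnits
    { toFun := fun g ↦ (P.rayMatrix g).det
      map_one' := by rw [rayMatrix_one, det_one]
      map_mul' := fun g h ↦ by rw [rayMatrix_mul, det_mul, mul_comm] }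

theorem orientationChar_conj (g h : (IntMat n)ˣ) :
    P.orientationChar (h * g * h⁻¹) = P.orientationChar g := by
  rw [map_mul, map_mul, map_inv, mul_inv_cancel_comm]

/-- The volume form on symmetric matrices for which the rays span a cube of volume `1`. -/
noncomputable def volume : IntMat n [⋀^Fin k]→ₗ[ℤ] ℤ := detRowAlternating.compLinearMap P.coord

theorem volume_congruence (g : (IntMat n)ˣ) {v : Fin k → IntMat n}
    (hv : ∀ i, ∃ u, v i = rankOne u) :
    P.volume (fun i ↦ congruence n g (v i)) = P.orientationChar g * P.volume v := by
  have hmul : (of fun i ↦ P.coord (congruence n g (v i))) =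
      (of fun i ↦ P.coord (v i)) * P.rayMatrix g := by
    refine funext fun i ↦ ?_
    obtain ⟨u, hu⟩ := hv i
    rw [mul_apply_eq_vecMul]
    change P.coord (congruence n g (v i)) = P.coord (v i) ᵥ* _
    rw [hu, coord_congruence_rankOne]
  exact (congrArg det hmul).trans ((det_mul _ _).trans (mul_comm _ _))

theorem volume_ray : P.volume P.ray = 1 := by
  change det (of fun i ↦ P.coord (P.ray i)) = 1
  rw [← det_one (n := Fin k)]
  congr 1
  ext i j
  rw [of_apply, coord_ray, one_eq_pi_single]

/-- The lists of distinct rays generating a full-dimensional cone of the fan. -/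
def IsTopCell (l : List (IntMat n)) : Prop := l.Nodup ∧ P.fan.IsCell l.toFinset ∧ l.length = k

variable (K : Type*) [CommRing K]

open Classical in
/-- The fundamental class of the fan: each full-dimensional cone, oriented by `P.volume`. -/
noncomputable def orientation (l : List (IntMat n)) : K :=
  if P.IsTopCell l then (P.volume fun i ↦ l.getD i 0 : ℤ) else 0

variable {P} {l : List (IntMat n)}

theorem orientation_of_isTopCell (hl : P.IsTopCell l) :
    P.orientation K l = (P.volume fun i ↦ l.getD i 0 : ℤ) := if_pos hl

theorem orientation_of_not_isTopCell (hl : ¬P.IsTopCell l) : P.orientation K l = 0 := if_neg hl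

theorem isTopCell_congr {l' : List (IntMat n)} (h : l.Perm l') :
    P.IsTopCell l ↔ P.IsTopCell l' := by
  rw [IsTopCell, IsTopCell, h.nodup_iff, h.length_eq, List.toFinset_eq_of_perm _ _ h]

variable (P) in
theorem isAlternating_orientation : IsAlternating (P.orientation K) := fun p a b q ↦ by
  have hperm : (p ++ a :: b :: q).Perm (p ++ b :: a :: q) := (List.Perm.swap b a q).append_left p
  by_cases hl : P.IsTopCell (p ++ a :: b :: q)
  · rw [orientation_of_isTopCell K hl, orientation_of_isTopCell K ((isTopCell_congr hperm).1 hl)]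
    have hlen := hl.2.2
    simp only [List.length_append, List.length_cons] at hlen
    rw [← Int.cast_neg, ← P.volume.map_swap _ (i := ⟨p.length, by omega⟩)
      (j := ⟨p.length + 1, by omega⟩) (by simp)]
    congr 2
    ext1 i
    rw [Function.comp_apply, Equiv.swap_apply_def]
    split_ifs <;> grind
  · rw [orientation_of_not_isTopCell K hl,
      orientation_of_not_isTopCell K (mt (isTopCell_congr hperm).2 hl), neg_zero]

variable (P) in
theorem orientation_mem_chains : P.orientation K ∈ P.fan.shelling.chains K k :=
  ⟨P.isAlternating_orientation K, fun _ hl ↦ by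
    by_contra h
    exact hl (orientation_of_not_isTopCell K h)⟩

theorem isTopCell_map_congruence (hl : P.IsTopCell l) (g : (IntMat n)ˣ) :
    P.IsTopCell (l.map (congruence n g)) := by
  obtain ⟨hnodup, hcell, hlen⟩ := hl
  refine ⟨hnodup.map ((congruence n).apply_bijective g).injective, ?_,
    (List.length_map _).trans hlen⟩
  have himage : (l.map (congruence n g)).toFinset = l.toFinset.image (congruence n g) := by
    ext; simp
  exact himage ▸ isCell_fan_image_congruence hcell g

theorem orientation_map_congruence (g : (IntMat n)ˣ) (l : List (IntMat n)) :
    P.orientation K (l.map (congruence n g)) = P.orientationChar g • P.orientation K l := by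
  by_cases hl : P.IsTopCell l
  · rw [orientation_of_isTopCell K hl, orientation_of_isTopCell K (isTopCell_map_congruence hl g)]
    obtain ⟨-, hcell, rfl⟩ := hl
    have hv (i : Fin l.length) : ∃ u, l.getD i 0 = rankOne u :=
      exists_rankOne_of_isCell_fan hcell (by simp)
    have hmap (i : Fin l.length) :
        (l.map (congruence n g)).getD i 0 = congruence n g (l.getD i 0) := by simp
    simp only [hmap, P.volume_congruence g hv, Units.smul_def, zsmul_eq_mul, Int.cast_mul]
  · have hl' : ¬P.IsTopCell (l.map (congruence n g)) := fun h ↦ hl <| by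
      simpa [Function.comp_def] using isTopCell_map_congruence h g⁻¹
    rw [orientation_of_not_isTopCell K hl, orientation_of_not_isTopCell K hl', smul_zero]

variable (P) in
theorem boundary_orientation : P.fan.shelling.boundary (P.orientation K) = 0 := by
  ext l
  by_cases hcell : P.fan.shelling.IsCell l.toFinset
  swap
  · exact P.fan.shelling.boundary_apply_of_not_isCell _ hcell
  rw [P.fan.shelling.boundary_apply _ hcell, Pi.zero_apply]
  have hcons (w) (hw : w ∈ P.fan.coface l.toFinset) :
      P.IsTopCell (w :: l) ↔ l.Nodup ∧ l.length + 1 = k := by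
    obtain ⟨hwl, hcell'⟩ := (VoronoiFan.mem_coface hcell).1 hw
    rw [IsTopCell, List.nodup_cons, List.toFinset_cons, List.length_cons]
    exact ⟨fun h ↦ ⟨h.1.2, h.2.2⟩, fun h ↦ ⟨⟨mt List.mem_toFinset.2 hwl, h.1⟩, hcell', h.2⟩⟩
  by_cases hl : l.Nodup ∧ l.length + 1 = k
  swap
  · exact sum_eq_zero fun w hw ↦ orientation_of_not_isTopCell K (mt (hcons w hw).1 hl)
  have hsum := sum_coface_mem_span hcell
    ((congrArg (· + 1) (List.toFinset_card_of_nodup hl.1)).trans hl.2)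
  obtain ⟨hnodup, rfl⟩ := hl
  have hvol (w) (hw : w ∈ P.fan.coface l.toFinset) :
      P.orientation K (w :: l) = (P.volume (vecCons w fun i ↦ l.getD i 0) : ℤ) := by
    rw [orientation_of_isTopCell K ((hcons w hw).2 ⟨hnodup, rfl⟩)]
    congr 2
    ext1 i
    cases i using Fin.cases <;> simp
  have hspan : ∑ w ∈ P.fan.coface l.toFinset, w ∈
      Submodule.span ℤ (Set.range fun i : Fin l.length ↦ l.getD i 0) := by
    refine Submodule.span_mono (fun x hx ↦ ?_) hsum
    obtain ⟨i, hi, rfl⟩ := List.getElem_of_mem (List.mem_toFinset.1 hx)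
    exact ⟨⟨i, hi⟩, by simp [hi]⟩
  refine (sum_congr rfl hvol).trans ?_
  rw [← Int.cast_sum, sum_alternatingMap_vecCons_eq_zero _ hspan, Int.cast_zero]

end PerfectForm

end Orientation

section Acyclicity

open Matrix

theorem ReversesOrientation.image {X : Type*} [DecidableEq X] {s : ℤˣ} {f f' e : X → X}
    {S : Finset X} (h : ReversesOrientation s f S) (he : Function.Injective e)
    (hf : ∀ x ∈ S, f' (e x) = e (f x)) : ReversesOrientation s f' (S.image e) := by
  refine h.imp (fun ⟨hs, a, ha, b, hb, hab, hswap⟩ ↦ ⟨hs, e a, mem_image_of_mem e ha, e b,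
    mem_image_of_mem e hb, he.ne hab, forall_mem_image.2 fun x hx ↦ ?_⟩)
    (And.imp_right fun hfix ↦ forall_mem_image.2 fun x hx ↦ by rw [hf x hx, hfix x hx])
  rw [hf x hx, hswap x hx, he.map_swap]

namespace PerfectForm

variable {n k : ℕ} {P : PerfectForm n k} {G K : Type} [Group G] [Field K] [CharZero K]

theorem orientation_map_congruence_ray_ne_zero (g : (IntMat n)ˣ) :
    P.orientation K ((List.ofFn P.ray).map (congruence n g)) ≠ 0 := by
  have htop : P.IsTopCell (List.ofFn P.ray) := by
    have hrays : (List.ofFn P.ray).toFinset = univ.image P.ray := by ext; simp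
    refine ⟨List.nodup_ofFn.2 P.ray_injective, isCell_fan_iff.2 ?_, List.length_ofFn⟩
    rw [hrays]
    exact ⟨P.isSpanning_rays, 1, by simp [cone]⟩
  have hvol : (fun i : Fin k ↦ (List.ofFn P.ray).getD i 0) = P.ray := by ext1; simp
  rw [orientation_map_congruence, orientation_of_isTopCell K htop, hvol, volume_ray, Int.cast_one,
    Ne, smul_eq_zero_iff_eq]
  exact one_ne_zero

theorem isZero_groupCohomology_trivial [NeZero n] (r : G →* (IntMat n)ˣ)
    (hr : Function.Injective r)
    (hrev : ∀ S, P.fan.IsCell S → S.card < k → ∃ g : G,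
      ReversesOrientation (P.orientationChar (r g)) (congruence n (r g)) S) (i : ℕ) :
    Limits.IsZero (groupCohomology (Rep.trivial K G K) (i + 1)) := by
  let : MulAction G (IntMat n) := MulAction.compHom (IntMat n) ((congruence n).comp r)
  have hproper : P.fan.shelling.IsProper G :=
    { isCell_smul := fun g _ hS ↦ isCell_fan_image_congruence hS (r g)
      finite_stabilizer := fun hS ↦
        (Set.Finite.preimage (f := r) hr.injOn (finite_stabilizer_of_isCell_fan hS)).to_subtype }
  obtain ⟨g, hg⟩ := P.fan.base_spec.1
  have hdim : P.fan.shelling.base.card = k := (congrArg card hg).symm.trans (P.card_cone g)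
  have hempty : ¬P.fan.IsCell ∅ := fun h ↦
    one_ne_zero (congrFun ((isCell_fan_iff.1 h).1 1 (by simp)) (0 : Fin n))
  have hcycle : P.orientation K ∈ P.fan.shelling.cycles K k :=
    ⟨P.orientation_mem_chains K, P.boundary_orientation K⟩
  refine hproper.isZero_groupCohomology_trivial (ε := P.orientationChar.comp r)
    (o := P.orientation K) (l := (List.ofFn P.ray).map (congruence n g))
    (fun S hS ↦ hS.card_le.trans hdim.ge) hempty (fun S hS hcard ↦ hrev S hS (hcard.trans_eq hdim))
    (hdim.symm ▸ hcycle) (fun g ↦ ?_) ?_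
    (orientation_map_congruence_ray_ne_zero g) i
  · ext l
    rw [twistedRep_apply]
    refine (congrArg _ (orientation_map_congruence K (r g⁻¹) l)).trans ?_
    rw [smul_smul, MonoidHom.comp_apply, map_inv, map_inv, mul_inv_cancel, one_smul]
  · refine Eq.trans ?_ hg
    ext
    simp [mem_cone]

theorem isZero_groupCohomology_trivial_of_normal [NeZero n] {r : G →* (IntMat n)ˣ}
    (hr : Function.Injective r) (N : Subgroup (IntMat n)ˣ) [N.Normal] (hN : N ≤ r.range)
    (hrev : ∀ I ≠ univ, IsSpanning (I.image P.ray) → ∃ γ ∈ N,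
      ReversesOrientation (P.orientationChar γ) (congruence n γ) (I.image P.ray)) (i : ℕ) :
    Limits.IsZero (groupCohomology (Rep.trivial K G K) (i + 1)) := by
  refine P.isZero_groupCohomology_trivial r hr (fun S hS hcard ↦ ?_) i
  obtain ⟨hspan, h, hsub⟩ := isCell_fan_iff.1 hS
  obtain ⟨I, rfl⟩ : ∃ I : Finset (Fin k), S = (I.image P.ray).image (congruence n h) := by
    obtain ⟨I, -, rfl⟩ := subset_image_iff.1 hsub
    exact ⟨I, (image_image ..).symm⟩
  have hI : I ≠ univ := by
    rintro rfl
    exact hcard.ne ((congrArg card (image_image ..)).trans (P.card_cone h))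
  have hspan' : IsSpanning (I.image P.ray) := by
    have := hspan.image_congruence h⁻¹
    rw [image_image] at this
    simpa [Function.comp_def] using this
  obtain ⟨γ, hγ, hreverse⟩ := hrev I hI hspan'
  obtain ⟨g, hg⟩ := hN (Subgroup.Normal.conj_mem ‹_› γ hγ h)
  refine ⟨g, ?_⟩
  rw [hg, orientationChar_conj]
  exact hreverse.image ((congruence n).apply_bijective h).injective fun A _ ↦ by
    simp [map_mul]

end PerfectForm

/-- The reflections fixing two of the three rays of `perfectFormA₂`. -/
def reflectionA₂ : Fin 3 → (IntMat 2)ˣ :=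
  ![⟨!![-1, 0; 2, 1], !![-1, 0; 2, 1], by decide, by decide⟩,
    ⟨!![1, 2; 0, -1], !![1, 2; 0, -1], by decide, by decide⟩,
    ⟨!![1, 0; 0, -1], !![1, 0; 0, -1], by decide, by decide⟩]

theorem congruence_reflectionA₂ : ∀ i j, i ≠ j →
    congruence 2 (reflectionA₂ j) (perfectFormA₂.ray i) = perfectFormA₂.ray i := by
  decide +kernel

theorem orientationChar_reflectionA₂ : ∀ j,
    perfectFormA₂.orientationChar (reflectionA₂ j) = -1 := by
  decide +kernel

/-- The principal congruence subgroup of level `m` in `GLₙ(ℤ)`. -/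
def principalCongruenceSubgroup (n m : ℕ) : Subgroup (IntMat n)ˣ :=
  (GeneralLinearGroup.map (Int.castRingHom (ZMod m))).ker

theorem mem_principalCongruenceSubgroup {n m : ℕ} {g : (IntMat n)ˣ} :
    g ∈ principalCongruenceSubgroup n m ↔ ∃ B, g.val = 1 + (m : ℤ) • B := by
  have hentry (i j : Fin n) : ((g.val i j : ℤ) : ZMod m) = (1 : Matrix _ _ (ZMod m)) i j ↔
      (m : ℤ) ∣ g.val i j - (1 : IntMat n) i j := by
    rw [← ZMod.intCast_zmod_eq_zero_iff_dvd, Int.cast_sub, sub_eq_zero, one_apply, one_apply]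
    simp
  have hmem : g ∈ principalCongruenceSubgroup n m ↔
      ∀ i j, (m : ℤ) ∣ g.val i j - (1 : IntMat n) i j := by
    simp only [← hentry, principalCongruenceSubgroup, MonoidHom.mem_ker, Units.ext_iff,
      ← Matrix.ext_iff]
    rfl
  rw [hmem]
  refine ⟨fun h ↦ ?_, ?_⟩
  · choose B hB using h
    exact ⟨of B, by ext i j; simp [← hB]⟩
  · rintro ⟨B, hB⟩ i j
    exact ⟨B i j, by rw [hB, Matrix.add_apply, add_sub_cancel_left, Matrix.smul_apply, smul_eq_mul]⟩

theorem reflectionA₂_mem_principalCongruenceSubgroup (j : Fin 3) :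
    reflectionA₂ j ∈ principalCongruenceSubgroup 2 2 := by
  have h : ∀ j, GeneralLinearGroup.map (Int.castRingHom (ZMod 2)) (reflectionA₂ j) = 1 := by
    decide +kernel
  exact h j

theorem isZero_groupCohomology_trivial_of_principalCongruenceSubgroup_le
    {G K : Type} [Group G] [Field K] [CharZero K] {r : G →* (IntMat 2)ˣ}
    (hr : Function.Injective r) (hrange : principalCongruenceSubgroup 2 2 ≤ r.range) (i : ℕ) :
    Limits.IsZero (groupCohomology (Rep.trivial K G K) (i + 1)) := by
  have : (principalCongruenceSubgroup 2 2).Normal := MonoidHom.normal_ker _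
  refine PerfectForm.isZero_groupCohomology_trivial_of_normal (P := perfectFormA₂) hr _ hrange
    (fun I hI _ ↦ ?_) i
  obtain ⟨j, hj⟩ := not_forall.1 (mt eq_univ_iff_forall.2 hI)
  exact ⟨_, reflectionA₂_mem_principalCongruenceSubgroup j,
    .inr ⟨orientationChar_reflectionA₂ j, forall_mem_image.2 fun i hi ↦
      congruence_reflectionA₂ i j (ne_of_mem_of_not_mem hi hj)⟩⟩

/-- Square roots of ten involutions. Each proper spanning set of rays of `perfectFormA₃` has two
elements which one of these involutions exchanges while it fixes all the others. Orientation
characters and determinants of squares being trivial, none need be computed. -/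
def exchangeRootA₃ : Fin 10 → (IntMat 3)ˣ :=
  ![⟨!![-1, -2, -1; 1, 1, 0; 0, 0, 1], !![1, 2, 1; -1, -1, -1; 0, 0, 1], by decide, by decide⟩,
    ⟨!![1, 0, -1; 0, 1, 0; 2, 1, -1], !![-1, -1, 1; 0, 1, 0; -2, -1, 1], by decide, by decide⟩,
    ⟨!![0, -1, -1; 1, 0, 0; 0, 0, 1], !![0, 1, 0; -1, 0, -1; 0, 0, 1], by decide, by decide⟩,
    ⟨!![1, -1, 0; 2, -1, 1; 0, 0, 1], !![-1, 1, -1; -2, 1, -1; 0, 0, 1], by decide, by decide⟩,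
    ⟨!![1, 0, 1; 0, 0, -1; 0, 1, 0], !![1, 1, 0; 0, 0, 1; 0, -1, 0], by decide, by decide⟩,
    ⟨!![-1, -1, -2; 0, 1, 0; 1, 0, 1], !![1, 1, 2; 0, 1, 0; -1, -1, -1], by decide, by decide⟩,
    ⟨!![0, -1, -1; 0, 1, 0; 1, 0, 0], !![0, 0, 1; 0, 1, 0; -1, -1, 0], by decide, by decide⟩,
    ⟨!![-1, -1, -1; 1, 1, 0; 1, 0, 1], !![1, 1, 1; -1, 0, -1; -1, -1, 0], by decide, by decide⟩,
    ⟨!![0, -1, 0; 1, 1, 1; -1, 0, 0], !![0, 0, -1; -1, 0, 0; 1, 1, 1], by decide, by decide⟩,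
    ⟨!![0, -1, 1; 1, 1, 0; 0, 1, 0], !![0, 1, -1; 0, 0, 1; 1, 0, 1], by decide, by decide⟩]

theorem exists_exchangeRootA₃ : ∀ I : Finset (Fin 6), I ≠ univ →
    (∃ x ∈ Fintype.piFinset fun _ ↦ ({0, 1} : Finset ℤ), x ≠ 0 ∧ ∀ i ∈ I, rootA₃ i ⬝ᵥ x = 0) ∨
    ∃ t, ∃ a ∈ I, ∃ b ∈ I, a ≠ b ∧ ∀ i ∈ I,
      rankOne ((exchangeRootA₃ t).val *ᵥ (exchangeRootA₃ t).val *ᵥ rootA₃ i) =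
        rankOne (rootA₃ (Equiv.swap a b i)) := by
  decide +kernel

theorem exists_reversesOrientation_perfectFormA₃ {I : Finset (Fin 6)} (hI : I ≠ univ)
    (hspan : IsSpanning (I.image perfectFormA₃.ray)) :
    ∃ γ : (IntMat 3)ˣ, GeneralLinearGroup.det γ = 1 ∧
      ReversesOrientation (perfectFormA₃.orientationChar γ) (congruence 3 γ)
        (I.image perfectFormA₃.ray) := by
  rcases exists_exchangeRootA₃ I hI with ⟨x, -, hx, hxI⟩ | ⟨t, a, ha, b, hb, hab, hexchange⟩
  · refine absurd (hspan x (forall_mem_image.2 fun i hi ↦ ?_)) hx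
    exact (evalForm_rankOne x _).trans (sq_eq_zero_iff.2 (hxI i hi))
  · refine ⟨exchangeRootA₃ t ^ 2, by rw [map_pow, Int.units_sq],
      .inl ⟨by rw [map_pow, Int.units_sq], _, mem_image_of_mem _ ha, _, mem_image_of_mem _ hb,
        perfectFormA₃.ray_injective.ne hab, forall_mem_image.2 fun i hi ↦ ?_⟩⟩
    rw [perfectFormA₃.ray_injective.swap_apply, PerfectForm.ray, congruence_rankOne, pow_two,
      Units.val_mul, ← mulVec_mulVec]
    exact hexchange i hi

theorem isZero_groupCohomology_trivial_of_ker_det_le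
    {G K : Type} [Group G] [Field K] [CharZero K] {r : G →* (IntMat 3)ˣ}
    (hr : Function.Injective r) (hrange : (GeneralLinearGroup.det).ker ≤ r.range) (i : ℕ) :
    Limits.IsZero (groupCohomology (Rep.trivial K G K) (i + 1)) :=
  PerfectForm.isZero_groupCohomology_trivial_of_normal (P := perfectFormA₃) hr _ hrange
    (fun _ hI hspan ↦ exists_reversesOrientation_perfectFormA₃ hI hspan) i

end Acyclicity

section Involution

open Matrix

theorem exists_eq_smul_row (l : Fin 3 → ℤ) :
    ∃ (P : SpecialLinearGroup (Fin 3) ℤ) (c : ℤ), l = c • P.val 2 := by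
  obtain ⟨a, b, ha, hb, hab⟩ := extract_gcd (l 0) (l 1)
  obtain ⟨x, y, hxy⟩ := (gcd_isUnit_iff a b).1 hab
  obtain ⟨d, c, hd, hc, hdc⟩ := extract_gcd (gcd (l 0) (l 1)) (l 2)
  obtain ⟨z, w, hzw⟩ := (gcd_isUnit_iff d c).1 hdc
  refine ⟨⟨!![-y, x, 0; -w * a, -w * b, z; d * a, d * b, c], ?_⟩,
    gcd (gcd (l 0) (l 1)) (l 2), ?_⟩
  · rw [det_fin_three]
    simp only [of_apply, Matrix.cons_val]
    linear_combination (d * z + c * w) * hxy + hzw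
  · ext i
    fin_cases i
    · exact ha.trans ((congrArg (· * a) hd).trans (mul_assoc ..))
    · exact hb.trans ((congrArg (· * b) hd).trans (mul_assoc ..))
    · exact hc

theorem exists_conj_row_eq {h : SpecialLinearGroup (Fin 3) ℤ} (hh : h * h = 1) :
    ∃ P : SpecialLinearGroup (Fin 3) ℤ, (P * h * P⁻¹).val 2 = (1 : IntMat 3) 2 := by
  have hdet : (h.val - 1).det = 0 := by
    have hsq : h.val * h.val = 1 := congrArg Subtype.val hh
    have hneg : h.val * (h.val - 1) = -(h.val - 1) := by rw [mul_sub, mul_one, neg_sub, hsq]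
    have hodd := congrArg det hneg
    rw [det_mul, h.prop, det_neg, Fintype.card_fin] at hodd
    omega
  obtain ⟨l, hl₀, hl⟩ := exists_vecMul_eq_zero_iff.2 hdet
  obtain ⟨P, c, rfl⟩ := exists_eq_smul_row l
  have hfix : P.val 2 ᵥ* h.val = P.val 2 := by
    rw [vecMul_sub, vecMul_one, sub_eq_zero, smul_vecMul] at hl
    exact smul_right_injective _ (left_ne_zero_of_smul hl₀) hl
  refine ⟨P, ?_⟩
  calc (P.val * h.val * P⁻¹.val) 2 = (P.val * P⁻¹.val) 2 := by
        rw [mul_apply_eq_vecMul, mul_apply_eq_vecMul, hfix, ← mul_apply_eq_vecMul]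
    _ = (1 : IntMat 3) 2 := congrArg (·.val 2) (mul_inv_cancel P)

/-- The involutions of determinant `1` with last row `(0, 0, 1)`. Up to conjugation, these are all
nontrivial involutions in `SL₃(ℤ)`. -/
def blockInvolution (v w : ℤ) : SpecialLinearGroup (Fin 3) ℤ :=
  ⟨!![-1, 0, v; 0, -1, w; 0, 0, 1], by simp [det_fin_three]⟩

theorem eq_blockInvolution {M : SpecialLinearGroup (Fin 3) ℤ} (hM : M * M = 1) (hne : M ≠ 1)
    (hrow : M.val 2 = (1 : IntMat 3) 2) : M = blockInvolution (M.val 0 2) (M.val 1 2) := by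
  have h₂₀ : M.val 2 0 = 0 := congrFun hrow 0
  have h₂₁ : M.val 2 1 = 0 := congrFun hrow 1
  have h₂₂ : M.val 2 2 = 1 := congrFun hrow 2
  have hadj (i j : Fin 3) : M.val.adjugate i j = M.val i j :=
    congrArg (·.val i j) (inv_eq_of_mul_eq_one_left hM)
  have hsq (i j : Fin 3) : M.val i 0 * M.val 0 j + M.val i 1 * M.val 1 j + M.val i 2 * M.val 2 j =
      (1 : IntMat 3) i j := by
    rw [← Fin.sum_univ_three (fun k ↦ M.val i k * M.val k j), ← mul_apply]
    exact congrArg (·.val i j) hM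
  have h₀₁ : M.val 0 1 = 0 := by simpa [adjugate_fin_three, h₂₁, h₂₂, neg_eq_self] using hadj 0 1
  have h₁₀ : M.val 1 0 = 0 := by simpa [adjugate_fin_three, h₂₀, h₂₂, neg_eq_self] using hadj 1 0
  have h₁₁ : M.val 1 1 = M.val 0 0 := by simpa [adjugate_fin_three, h₂₁, h₂₂] using hadj 0 0
  have h₀₂ : M.val 0 0 * M.val 0 2 + M.val 0 2 = 0 := by simpa [h₀₁, h₂₂] using hsq 0 2
  have h₁₂ : M.val 0 0 * M.val 1 2 + M.val 1 2 = 0 := by simpa [h₁₀, h₁₁, h₂₂] using hsq 1 2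
  have h₀₀ : M.val 0 0 = -1 := by
    refine (mul_self_eq_one_iff.1 (by simpa [h₀₁, h₂₀] using hsq 0 0)).resolve_left fun h₀₀ ↦ hne ?_
    rw [h₀₀, one_mul, add_self_eq_zero] at h₀₂ h₁₂
    ext i j
    fin_cases i <;> fin_cases j <;> simp [*]
  ext i j
  fin_cases i <;> fin_cases j <;> simp [blockInvolution, *]

theorem exists_conj_eq_blockInvolution {h : SpecialLinearGroup (Fin 3) ℤ} (hh : h * h = 1)
    (hne : h ≠ 1) : ∃ P v w, P * h * P⁻¹ = blockInvolution v w := by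
  obtain ⟨P, hP⟩ := exists_conj_row_eq hh
  refine ⟨P, _, _, eq_blockInvolution ?_ (mt conj_eq_one_iff.1 hne) hP⟩
  rw [conj_mul, hh, mul_one, mul_inv_cancel]

/-- The upper left `2 × 2` block. -/
def upperBlock (M : IntMat 3) : IntMat 2 := M.submatrix Fin.castSucc Fin.castSucc

variable {v w : ℤ}

theorem commute_blockInvolution_iff {M : IntMat 3} :
    Commute (blockInvolution v w).val M ↔ M 2 0 = 0 ∧ M 2 1 = 0 ∧
      2 * M 0 2 = v * M 2 2 - (M 0 0 * v + M 0 1 * w) ∧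
      2 * M 1 2 = w * M 2 2 - (M 1 0 * v + M 1 1 * w) := by
  refine ⟨fun h ↦ ?_, fun ⟨h₂₀, h₂₁, h₀₂, h₁₂⟩ ↦ ?_⟩
  · have hentry (i j : Fin 3) :
        ((blockInvolution v w).val * M) i j = (M * (blockInvolution v w).val) i j :=
      congrFun (congrFun h.eq i) j
    have h₂₀ : M 2 0 = -M 2 0 := by
      simpa [blockInvolution, mul_apply, Fin.sum_univ_three] using hentry 2 0
    have h₂₁ : M 2 1 = -M 2 1 := by
      simpa [blockInvolution, mul_apply, Fin.sum_univ_three] using hentry 2 1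
    have h₀₂ : -M 0 2 + v * M 2 2 = M 0 0 * v + M 0 1 * w + M 0 2 := by
      simpa [blockInvolution, mul_apply, Fin.sum_univ_three] using hentry 0 2
    have h₁₂ : -M 1 2 + w * M 2 2 = M 1 0 * v + M 1 1 * w + M 1 2 := by
      simpa [blockInvolution, mul_apply, Fin.sum_univ_three] using hentry 1 2
    refine ⟨?_, ?_, ?_, ?_⟩ <;> linarith
  · ext i j
    fin_cases i <;> fin_cases j <;>
      simp [blockInvolution, mul_apply, Fin.sum_univ_succ, h₂₀, h₂₁] <;> linarith [h₀₂, h₁₂]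

theorem mem_centralizer_blockInvolution_iff {M : SpecialLinearGroup (Fin 3) ℤ} :
    M ∈ Subgroup.centralizer {blockInvolution v w} ↔
      Commute (blockInvolution v w).val M.val := by
  exact Subgroup.mem_centralizer_singleton_iff.trans (eq_comm.trans Subtype.ext_iff)

theorem upperBlock_mul {M N : IntMat 3} (hN : Commute (blockInvolution v w).val N) :
    upperBlock (M * N) = upperBlock M * upperBlock N := by
  obtain ⟨h₀, h₁, -⟩ := commute_blockInvolution_iff.1 hN
  ext i j
  fin_cases j <;> simp [upperBlock, mul_apply, Fin.sum_univ_succ, h₀, h₁]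

variable (v w) in
/-- The action of the centralizer of an involution on its `-1`-eigenspace. -/
def blockHom : Subgroup.centralizer {blockInvolution v w} →* (IntMat 2)ˣ :=
  MonoidHom.toHomUnits
    { toFun := fun M ↦ upperBlock M.val.val
      map_one' := submatrix_one _ (Fin.castSucc_injective 2)
      map_mul' := fun _ N ↦ upperBlock_mul (mem_centralizer_blockInvolution_iff.1 N.2) }

theorem blockHom_injective : Function.Injective (blockHom v w) := by
  refine (injective_iff_map_eq_one _).2 fun ⟨M, hM⟩ hone ↦ Subtype.ext (Subtype.ext ?_)
  obtain ⟨h₂₀, h₂₁, h₀₂, h₁₂⟩ :=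
    commute_blockInvolution_iff.1 (mem_centralizer_blockInvolution_iff.1 hM)
  have hblock (i j : Fin 2) : M.val i.castSucc j.castSucc = (1 : IntMat 2) i j :=
    congrArg (·.val i j) hone
  have h₀₀ : M.val 0 0 = 1 := hblock 0 0
  have h₀₁ : M.val 0 1 = 0 := hblock 0 1
  have h₁₀ : M.val 1 0 = 0 := hblock 1 0
  have h₁₁ : M.val 1 1 = 1 := hblock 1 1
  have h₂₂ : M.val 2 2 = 1 := by
    have hdet := M.prop
    rw [det_fin_three] at hdet
    simpa [h₀₀, h₀₁, h₁₁, h₂₀, h₂₁] using hdet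
  simp only [h₀₀, h₀₁, h₁₀, h₁₁, h₂₂] at h₀₂ h₁₂
  ext i j
  fin_cases i <;> fin_cases j <;> simp [*] <;> omega

theorem principalCongruenceSubgroup_le_range_blockHom :
    principalCongruenceSubgroup 2 2 ≤ (blockHom v w).range := by
  intro u hu
  obtain ⟨B, hB⟩ := mem_principalCongruenceSubgroup.1 hu
  have hentry (i j : Fin 2) : u.val i j = (1 : IntMat 2) i j + 2 * B i j :=
    congrFun (congrFun hB i) j
  have hunit : IsUnit u.val.det := (isUnit_iff_isUnit_det _).1 u.isUnit
  obtain ⟨d, hdet⟩ : ∃ d : ℤ, u.val.det = 1 + 2 * d := by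
    rcases Int.isUnit_iff.1 hunit with h | h
    · exact ⟨0, by omega⟩
    · exact ⟨-1, by omega⟩
  have hsq : u.val.det * u.val.det = 1 := Int.isUnit_mul_self hunit
  let M : SpecialLinearGroup (Fin 3) ℤ :=
    ⟨!![u.val 0 0, u.val 0 1, d * v - (B 0 0 * v + B 0 1 * w);
        u.val 1 0, u.val 1 1, d * w - (B 1 0 * v + B 1 1 * w);
        0, 0, u.val.det], by simpa [det_fin_three, det_fin_two, sub_mul] using hsq⟩
  have hM : M ∈ Subgroup.centralizer {blockInvolution v w} := by
    rw [mem_centralizer_blockInvolution_iff, commute_blockInvolution_iff]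
    refine ⟨rfl, rfl, ?_, ?_⟩ <;> simp [M, hentry, hdet] <;> ring
  refine ⟨⟨M, hM⟩, Units.ext ?_⟩
  ext i j
  fin_cases i <;> fin_cases j <;> rfl

theorem map_conj_centralizer_singleton {G : Type*} [Group G] (p h : G) :
    (Subgroup.centralizer {h}).map (MulAut.conj p).toMonoidHom =
      Subgroup.centralizer {p * h * p⁻¹} := by
  ext x
  rw [Subgroup.mem_map_equiv, Subgroup.mem_centralizer_singleton_iff,
    Subgroup.mem_centralizer_singleton_iff, ← (MulAut.conj p).injective.eq_iff]
  simp [mul_assoc]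

theorem exists_hom_centralizer_involution {h : SpecialLinearGroup (Fin 3) ℤ} (hh : h * h = 1)
    (hne : h ≠ 1) : ∃ r : Subgroup.centralizer {h} →* (IntMat 2)ˣ, Function.Injective r ∧
      principalCongruenceSubgroup 2 2 ≤ r.range ∧
      ∀ x : Subgroup.centralizer {h}, x.val = h → r x = -1 := by
  obtain ⟨P, v, w, hP⟩ := exists_conj_eq_blockInvolution hh hne
  let e : Subgroup.centralizer {h} ≃* Subgroup.centralizer {blockInvolution v w} :=
    ((MulAut.conj P).subgroupMap _).trans
      (MulEquiv.subgroupCongr ((map_conj_centralizer_singleton P h).trans (by rw [hP])))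
  refine ⟨(blockHom v w).comp e, blockHom_injective.comp e.injective, ?_, ?_⟩
  · rw [MonoidHom.range_comp, MonoidHom.range_eq_top.2 e.surjective, ← MonoidHom.range_eq_map]
    exact principalCongruenceSubgroup_le_range_blockHom
  · intro x hx
    have hx : (e x).val = blockInvolution v w := (congrArg (MulAut.conj P) hx).trans hP
    apply Units.ext
    change upperBlock (e x).val.val = -1
    rw [hx]
    ext i j
    fin_cases i <;> fin_cases j <;> rfl

end Involution

section CentralizersInGL₂

open Matrix

variable {B : (IntMat 2)ˣ}

theorem trace_eq_zero_of_mul_self_eq_smul_one {s : ℤ} (hsq : B.val * B.val = s • 1) (h₁ : B ≠ 1)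
    (h₂ : B ≠ -1) : B.val.trace = 0 := by
  by_contra htrace
  have hentry (i j : Fin 2) : B.val i 0 * B.val 0 j + B.val i 1 * B.val 1 j =
      s * (1 : IntMat 2) i j := by
    rw [← Fin.sum_univ_two (fun k ↦ B.val i k * B.val k j), ← mul_apply, hsq]
    rfl
  have hcancel {x : ℤ} (hx : B.val.trace * x = 0) : x = 0 := (mul_eq_zero.1 hx).resolve_left htrace
  rw [trace_fin_two] at hcancel
  have h₀₁ : B.val 0 1 = 0 := hcancel (by linear_combination (hentry 0 1).trans (mul_zero s))
  have h₁₀ : B.val 1 0 = 0 := hcancel (by linear_combination (hentry 1 0).trans (mul_zero s))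
  have h₁₁ : B.val 1 1 = B.val 0 0 :=
    sub_eq_zero.1 (hcancel (by
      linear_combination (hentry 1 1).trans (mul_one s) - (hentry 0 0).trans (mul_one s)))
  have hunit : IsUnit (B.val 0 0) := by
    have := (isUnit_iff_isUnit_det _).1 B.isUnit
    rw [det_fin_two, h₀₁, zero_mul, sub_zero] at this
    exact isUnit_of_mul_isUnit_left this
  rcases Int.isUnit_iff.1 hunit with h₀₀ | h₀₀
  · refine h₁ (Units.ext ?_)
    ext i j
    fin_cases i <;> fin_cases j <;> simp [*]
  · refine h₂ (Units.ext ?_)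
    ext i j
    fin_cases i <;> fin_cases j <;> simp [*]

theorem two_smul_mul_eq_of_commute {R : Type*} [CommRing R] {M B : Matrix (Fin 2) (Fin 2) R}
    (hcomm : Commute M B) (hB : B.trace = 0) :
    (2 : R) • (M * B) = M.trace • B + (M * B).trace • 1 := by
  have hpolar : M * B + B * M =
      M.trace • B + B.trace • M + ((M * B).trace - M.trace * B.trace) • 1 := by
    ext i j
    fin_cases i <;> fin_cases j <;> simp [trace_fin_two, mul_apply] <;> ring
  rwa [← hcomm.eq, hB, zero_smul, add_zero, mul_zero, sub_zero, ← two_smul R] at hpolar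

theorem mem_Icc_of_mul_sq_add_sq_eq {e d t y : ℤ} (he : IsUnit e) (hd : IsUnit d)
    (h : e * t ^ 2 + y ^ 2 = 4 * d) : (t, y) ∈ Set.Icc ((-4, -4) : ℤ × ℤ) (4, 4) := by
  suffices hbound : (-4 ≤ t ∧ -4 ≤ y) ∧ t ≤ 4 ∧ y ≤ 4 from hbound
  have hle : |4 * d| = 4 := by rw [abs_mul, Int.isUnit_iff_abs_eq.1 hd]; rfl
  rcases Int.isUnit_iff.1 he with rfl | rfl
  · have := (le_abs_self _).trans hle.le
    refine ⟨⟨?_, ?_⟩, ?_, ?_⟩ <;> nlinarith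
  · have hfactor : (y - t) * (y + t) = 4 * d := by linear_combination h
    have hdvd {x : ℤ} (hx : x ∣ 4 * d) : |x| ≤ 4 :=
      Int.le_of_dvd four_pos (hle ▸ (abs_dvd_abs x _).2 hx)
    have hsub := abs_le.1 (hdvd (Dvd.intro _ hfactor))
    have hadd := abs_le.1 (hdvd (Dvd.intro_left _ hfactor))
    omega

theorem mul_trace_sq_add_trace_mul_sq_of_commute {R : Type*} [CommRing R]
    {M B : Matrix (Fin 2) (Fin 2) R} (hcomm : Commute M B) (hB : B.trace = 0) :
    B.det * M.trace ^ 2 + (M * B).trace ^ 2 = 4 * (M.det * B.det) := by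
  have hdet := congrArg det (two_smul_mul_eq_of_commute hcomm hB)
  rw [det_smul, Fintype.card_fin, det_mul] at hdet
  rw [trace_fin_two, add_eq_zero_iff_eq_neg] at hB
  rw [show (4 : R) = 2 ^ 2 by norm_num, hdet, det_fin_two, det_fin_two]
  simp only [Matrix.add_apply, Matrix.smul_apply, smul_eq_mul, one_apply_eq, one_apply_ne, ne_eq,
    zero_ne_one, one_ne_zero, not_false_eq_true, hB]
  ring

theorem finite_centralizer_of_trace_eq_zero (hB : B.val.trace = 0) :
    Finite (Subgroup.centralizer {B}) := by
  have hcomm (u : Subgroup.centralizer {B}) : Commute u.val.val B.val :=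
    congrArg Units.val (Subgroup.mem_centralizer_singleton_iff.1 u.2)
  have hunit (u : (IntMat 2)ˣ) : IsUnit u.val.det := (isUnit_iff_isUnit_det _).1 u.isUnit
  refine Finite.of_injective (β := Set.Icc ((-4, -4) : ℤ × ℤ) (4, 4))
    (fun u ↦ ⟨(u.val.val.trace, (u.val.val * B.val).trace), mem_Icc_of_mul_sq_add_sq_eq
      (hunit B) ((hunit u).mul (hunit B))
      (mul_trace_sq_add_trace_mul_sq_of_commute (hcomm u) hB)⟩) fun u u' huu' ↦ ?_
  obtain ⟨htrace, htrace'⟩ := Prod.ext_iff.1 (Subtype.ext_iff.1 huu')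
  have hmul : (2 : ℤ) • (u.val.val * B.val) = (2 : ℤ) • (u'.val.val * B.val) := by
    rw [two_smul_mul_eq_of_commute (hcomm u) hB, two_smul_mul_eq_of_commute (hcomm u') hB]
    exact congrArg₂ (· • B.val + · • 1) htrace htrace'
  exact Subtype.ext (Units.ext (B.isUnit.mul_left_injective
    (smul_right_injective _ two_ne_zero hmul)))

end CentralizersInGL₂

section PGroups

variable {G : Type*} [Group G]

theorem exists_pow_mem_of_isPGroup {p : ℕ} (hG : IsPGroup p G) {s : Set G}
    (h₁ : 1 ∈ s) {x : G} (hx : x ∉ s) : ∃ u ∉ s, u ^ p ∈ s := by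
  obtain ⟨k, hk⟩ := hG x
  induction k generalizing x with
  | zero => exact absurd (by rwa [← pow_one x, ← pow_zero p, hk]) hx
  | succ k ih =>
    by_cases hxp : x ^ p ∈ s
    · exact ⟨x, hx, hxp⟩
    · exact ih hxp (by rwa [← pow_mul, ← pow_succ'])

theorem exists_involution_of_isPGroup_two [Finite G] (hG : IsPGroup 2 G) :
    ∃ z ∈ Subgroup.center G, z * z = 1 ∧ ((∀ x, x = 1 ∨ x = z) ∨
      z ≠ 1 ∧ ∃ u, u ≠ 1 ∧ u ≠ z ∧ (u * u = 1 ∨ u * u = z)) := by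
  rcases subsingleton_or_nontrivial G with _ | _
  · exact ⟨1, one_mem _, one_mul 1, .inl fun x ↦ .inl (Subsingleton.elim x 1)⟩
  have : Fact (Nat.Prime 2) := ⟨Nat.prime_two⟩
  have := hG.center_nontrivial
  obtain ⟨x, hx⟩ := exists_ne (1 : Subgroup.center G)
  obtain ⟨⟨z, hz⟩, hz₁, hzz⟩ :=
    exists_pow_mem_of_isPGroup (hG.to_subgroup (Subgroup.center G)) (s := {1}) rfl hx
  rw [pow_two] at hzz
  refine ⟨z, hz, congrArg Subtype.val hzz, or_iff_not_imp_left.2 fun hall ↦ ?_⟩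
  obtain ⟨y, hy⟩ := not_forall.1 hall
  obtain ⟨u, hu, huu⟩ := exists_pow_mem_of_isPGroup hG (s := {1, z}) (.inl rfl) hy
  rw [pow_two] at huu
  exact ⟨fun h ↦ hz₁ (Subtype.ext h), u, fun h ↦ hu (.inl h), fun h ↦ hu (.inr h), huu⟩

theorem centralizer_eq_centralizer_singleton {H : Subgroup G} {z : H} (hH : ∀ x, x = 1 ∨ x = z) :
    Subgroup.centralizer (H : Set G) = Subgroup.centralizer {z.val} := by
  refine (Subgroup.centralizer_le (Set.singleton_subset_iff.2 z.2)).antisymm fun g hg ↦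
    Subgroup.mem_centralizer_iff.2 fun x hx ↦ ?_
  rcases hH ⟨x, hx⟩ with h | h
  · rw [show x = 1 from congrArg Subtype.val h, one_mul, mul_one]
  · rw [show x = z from congrArg Subtype.val h]
    exact (Subgroup.mem_centralizer_singleton_iff.1 hg).symm

end PGroups

section CentralizersInSL₃

open Matrix

variable {h : SpecialLinearGroup (Fin 3) ℤ}

theorem finite_centralizer_pair {u : SpecialLinearGroup (Fin 3) ℤ} (hh : h * h = 1) (hne : h ≠ 1)
    (hcomm : Commute h u) (hu₁ : u ≠ 1) (huh : u ≠ h) (hsq : u * u = 1 ∨ u * u = h) :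
    Finite (Subgroup.centralizer {h, u}) := by
  obtain ⟨r, hr, -, hrh⟩ := exists_hom_centralizer_involution hh hne
  let u' : Subgroup.centralizer {h} := ⟨u, Subgroup.mem_centralizer_singleton_iff.2 hcomm.eq.symm⟩
  let h' : Subgroup.centralizer {h} := ⟨h, Subgroup.mem_centralizer_singleton_iff.2 rfl⟩
  have hsq' : ∃ s : ℤ, (r u').val * (r u').val = s • 1 := by
    rw [← Units.val_mul, ← map_mul]
    rcases hsq with hsq | hsq
    · exact ⟨1, by rw [show u' * u' = 1 from Subtype.ext hsq, map_one, one_smul, Units.val_one]⟩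
    · exact ⟨-1, by rw [hrh _ hsq, neg_smul, one_smul, Units.val_neg, Units.val_one]⟩
  obtain ⟨s, hs⟩ := hsq'
  have htrace : (r u').val.trace = 0 := by
    refine trace_eq_zero_of_mul_self_eq_smul_one hs (fun hone ↦ hu₁ ?_) fun hneg ↦ huh ?_
    · exact congrArg Subtype.val (hr (hone.trans (map_one r).symm))
    · exact congrArg Subtype.val (hr (hneg.trans (hrh h' rfl).symm))
  have := finite_centralizer_of_trace_eq_zero htrace
  have hle : Subgroup.centralizer {h, u} ≤ Subgroup.centralizer {h} :=
    Subgroup.centralizer_le (Set.singleton_subset_iff.2 (Set.mem_insert h _))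
  have hmem (x : Subgroup.centralizer {h, u}) :
      r (Subgroup.inclusion hle x) ∈ Subgroup.centralizer {r u'} := by
    rw [Subgroup.mem_centralizer_singleton_iff, ← map_mul, ← map_mul]
    exact congrArg r (Subtype.ext (Subgroup.mem_centralizer_iff.1 x.2 u (.inr rfl)).symm)
  refine Finite.of_injective (fun x ↦ (⟨_, hmem x⟩ : Subgroup.centralizer {r u'})) fun x y hxy ↦ ?_
  exact Subgroup.inclusion_injective hle (hr (Subtype.ext_iff.1 hxy))

variable {K : Type} [Field K] [CharZero K]

theorem isZero_groupCohomology_trivial_centralizer_one (i : ℕ) :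
    Limits.IsZero (groupCohomology (Rep.trivial K (Subgroup.centralizer
      ({1} : Set (SpecialLinearGroup (Fin 3) ℤ))) K) (i + 1)) := by
  refine isZero_groupCohomology_trivial_of_ker_det_le
    (r := SpecialLinearGroup.toGL.comp (Subgroup.subtype _))
    (SpecialLinearGroup.toGL_injective.comp Subtype.val_injective) (fun u hu ↦ ?_) i
  let g : SpecialLinearGroup (Fin 3) ℤ := ⟨u.val, congrArg Units.val (MonoidHom.mem_ker.1 hu)⟩
  have hg : g ∈ Subgroup.centralizer {1} := by
    rw [Subgroup.mem_centralizer_singleton_iff, one_mul, mul_one]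
  exact ⟨⟨g, hg⟩, Units.ext rfl⟩

theorem isZero_groupCohomology_trivial_centralizer_singleton (hh : h * h = 1) (i : ℕ) :
    Limits.IsZero (groupCohomology (Rep.trivial K (Subgroup.centralizer {h}) K) (i + 1)) := by
  rcases eq_or_ne h 1 with rfl | hne
  · exact isZero_groupCohomology_trivial_centralizer_one i
  · obtain ⟨r, hr, hrange, -⟩ := exists_hom_centralizer_involution hh hne
    exact isZero_groupCohomology_trivial_of_principalCongruenceSubgroup_le hr hrange i

end CentralizersInSL₃

theorem centralizer_rationally_acyclic_general {K : Type} [Field K] [CharZero K]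
    (H : Subgroup (Matrix.SpecialLinearGroup (Fin 3) ℤ)) [Finite H] (hH : IsPGroup 2 H) :
    Nonempty
      (groupCohomology
        (Rep.trivial K
          (Subgroup.centralizer (H : Set (Matrix.SpecialLinearGroup (Fin 3) ℤ))) K) 0 ≅
        ModuleCat.of K K) ∧
    ∀ i : ℕ, 0 < i →
      Limits.IsZero
        (groupCohomology
          (Rep.trivial K
            (Subgroup.centralizer (H : Set (Matrix.SpecialLinearGroup (Fin 3) ℤ))) K) i) := by
  refine ⟨⟨groupCohomology.H0IsoOfIsTrivial _⟩, fun i hi ↦ ?_⟩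
  obtain ⟨j, rfl⟩ := Nat.exists_eq_succ_of_ne_zero hi.ne'
  obtain ⟨z, hz, hzz, hall | ⟨hz₁, u, hu₁, huz, huu⟩⟩ := exists_involution_of_isPGroup_two hH
  · rw [centralizer_eq_centralizer_singleton hall]
    exact isZero_groupCohomology_trivial_centralizer_singleton (congrArg Subtype.val hzz) j
  · have hcomm : Commute z.val u.val := congrArg Subtype.val (Subgroup.mem_center_iff.1 hz u).symm
    have hpair : Finite (Subgroup.centralizer {z.val, u.val}) :=
      finite_centralizer_pair (congrArg Subtype.val hzz) (mt OneMemClass.coe_eq_one.1 hz₁) hcomm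
        (mt OneMemClass.coe_eq_one.1 hu₁) (Subtype.coe_injective.ne huz)
        (huu.imp (congrArg Subtype.val) (congrArg Subtype.val))
    have hle := Subgroup.centralizer_le (Set.pair_subset z.2 u.2)
    have hfinite := Finite.of_injective _ (Subgroup.inclusion_injective hle)
    exact isZero_groupCohomology_trivial_of_finite (Nat.cast_ne_zero.2 Nat.card_pos.ne').isUnit j

/-- For every finite abelian 2-subgroup `H` of `SL₃(ℤ)`, the centralizer `C(H)` is
rationally acyclic: `H⁰(C(H); ℚ) = ℚ` and `Hⁱ(C(H); ℚ) = 0` for `i > 0`. -/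
theorem centralizer_rationally_acyclic
    (H : Subgroup (Matrix.SpecialLinearGroup (Fin 3) ℤ))
    (hfin : Finite H) (hab : ∀ a b : H, a * b = b * a)
    (h2 : ∃ k : ℕ, Nat.card H = 2 ^ k) :
    Nonempty
      (groupCohomology
        (Rep.trivial ℚ
          (Subgroup.centralizer (H : Set (Matrix.SpecialLinearGroup (Fin 3) ℤ))) ℚ) 0 ≅
        ModuleCat.of ℚ ℚ) ∧
    ∀ i : ℕ, 0 < i →
      Limits.IsZero
        (groupCohomology
          (Rep.trivial ℚ
            (Subgroup.centralizer (H : Set (Matrix.SpecialLinearGroup (Fin 3) ℤ))) ℚ) i) := by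
  obtain ⟨_, hk⟩ := h2
  exact centralizer_rationally_acyclic_general H (IsPGroup.of_card hk)
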